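/- arXiv:1705.07630 — 8 statements merged into one kernel-verified Lean document; each statement's English description precedes it below -/
import Mathlib

section
/- Let P be a finite poset with unique minimal element x₀ and let k be a field. The Hibi ring R_k(H) is an integral domain which is integrally closed in its field of fractions (i.e., R_k(H) is a normal domain). -/
open MvPolynomial

open scoped LaurentPolynomial

section IntegrallyClosed

/-- An integrally closed domain is integrally closed in each of its localizations at
non-zero-divisors. -/
theorem IsIntegrallyClosed.isIntegrallyClosedIn_of_isLocalization {R A : Type*} [CommRing R]
    [IsDomain R] [IsIntegrallyClosed R] [CommRing A] [Algebra R A] (M : Submonoid R)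
    [IsLocalization M A] (hM : M ≤ nonZeroDivisors R) : IsIntegrallyClosedIn R A := by
  have hunit (y : M) : IsUnit (Algebra.ofId R (FractionRing R) y) :=
    IsLocalization.map_units (FractionRing R) (⟨y, hM y.2⟩ : nonZeroDivisors R)
  refine AlgHom.isIntegrallyClosedIn (B := FractionRing R)
    (IsLocalization.liftAlgHom (M := M) (f := Algebra.ofId R (FractionRing R)) hunit) ?_ ‹_›
  refine (IsLocalization.lift_injective_iff (M := M) hunit).2 fun a b => ?_
  rw [(IsLocalization.injective A hM).eq_iff]
  exact (IsFractionRing.injective R (FractionRing R)).eq_iff.symm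

theorem LaurentPolynomial.isIntegrallyClosedIn (R : Type*) [CommRing R] [IsDomain R]
    [IsIntegrallyClosed R] : IsIntegrallyClosedIn (Polynomial R) R[T;T⁻¹] :=
  IsIntegrallyClosed.isIntegrallyClosedIn_of_isLocalization
    (Submonoid.powers (Polynomial.X : Polynomial R))
    (powers_le_nonZeroDivisors_of_noZeroDivisors Polynomial.X_ne_zero)

end IntegrallyClosed

namespace MvPolynomial

section Twist

variable {σ k : Type*}

/-- The algebra map `X z ↦ X z * T ^ (w z)`, which records the `w`-weight of each monomial as an
exponent of the Laurent variable `T`. -/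
noncomputable def laurentTwist (k : Type*) [CommRing k] (w : σ → ℤ) :
    MvPolynomial σ k →ₐ[k] (MvPolynomial σ k)[T;T⁻¹] :=
  aeval fun z => LaurentPolynomial.C (X z) * LaurentPolynomial.T (w z)

theorem laurentTwist_monomial [CommRing k] (w : σ → ℤ) (m : σ →₀ ℕ) (c : k) :
    laurentTwist k w (monomial m c) =
      LaurentPolynomial.C (monomial m c) * LaurentPolynomial.T (Finsupp.weight w m) := by
  have hT : ∀ s : Finset σ, ∏ z ∈ s, (LaurentPolynomial.T (m z * w z) :
      (MvPolynomial σ k)[T;T⁻¹]) = LaurentPolynomial.T (∑ z ∈ s, m z * w z) := by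
    classical
    intro s
    induction s using Finset.induction_on with
    | empty => simp
    | insert a s ha ih =>
      rw [Finset.prod_insert ha, Finset.sum_insert ha, ih, LaurentPolynomial.T_add]
  rw [laurentTwist, aeval_monomial, monomial_eq, LaurentPolynomial.algebraMap_apply, map_mul,
    Finsupp.weight_apply, Finsupp.prod, Finsupp.prod, Finsupp.sum, mul_assoc, map_prod]
  simp only [mul_pow, Finset.prod_mul_distrib, LaurentPolynomial.T_pow, hT, map_pow,
    nsmul_eq_mul, algebraMap_eq]

theorem coeff_coeff_laurentTwist [CommRing k] (w : σ → ℤ) (f : MvPolynomial σ k) (m : σ →₀ ℕ) :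
    coeff m ((laurentTwist k w f).coeff (Finsupp.weight w m)) = coeff m f := by
  classical
  induction f using MvPolynomial.induction_on' with
  | monomial u a =>
    rw [laurentTwist_monomial, ← LaurentPolynomial.single_eq_C_mul_T,
      AddMonoidAlgebra.coeff_single, Finsupp.single_apply, coeff_monomial]
    by_cases hu : u = m
    · simp [hu]
    · split_ifs <;> simp [hu]
  | add p q hp hq =>
    rw [map_add, AddMonoidAlgebra.coeff_add, Finsupp.add_apply, coeff_add, coeff_add, hp, hq]

/-- If all `w`-weights occurring in elements of a subalgebra `H` are nonnegative, then so are those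
occurring in any polynomial which is integral over `H`. -/
theorem weight_nonneg_of_isIntegral [Field k] (w : σ → ℤ) (H : Subalgebra k (MvPolynomial σ k))
    (hH : ∀ f ∈ H, ∃ p, Polynomial.toLaurent p = laurentTwist k w f)
    {f : MvPolynomial σ k} (hf : IsIntegral H f) {m : σ →₀ ℕ} (hm : m ∈ f.support) :
    0 ≤ Finsupp.weight w m := by
  have := LaurentPolynomial.isIntegrallyClosedIn (MvPolynomial σ k)
  have hint : IsIntegral (Polynomial (MvPolynomial σ k)) (laurentTwist k w f) := by
    let e := RingEquiv.ofLeftInverse (f := Polynomial.toLaurent (R := MvPolynomial σ k))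
      LaurentPolynomial.leftInverse_trunc_toLaurent
    let g : H →+* (Polynomial.toLaurent (R := MvPolynomial σ k)).range :=
      ((laurentTwist k w).toRingHom.comp (algebraMap H _)).codRestrict _
        fun h => hH h h.2
    refine IsIntegral.map_of_comp_eq (e.symm.toRingHom.comp g)
      (laurentTwist k w).toRingHom (RingHom.ext fun h => ?_) hf
    exact congrArg Subtype.val (e.apply_symm_apply (g h))
  obtain ⟨p, hp⟩ := IsIntegrallyClosedIn.algebraMap_eq_of_integral hint
  by_contra! hneg
  refine mem_support_iff.mp hm ?_
  rw [← coeff_coeff_laurentTwist w f m, ← hp, LaurentPolynomial.algebraMap_eq_toLaurent]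
  have hnot : Finsupp.weight w m ∉ (Polynomial.toLaurent p).coeff.support := by
    rw [LaurentPolynomial.support_coeff_toLaurent, Finset.mem_map]
    rintro ⟨n, -, hn⟩
    exact absurd (hn ▸ Int.natCast_nonneg n) hneg.not_ge
  rw [Finsupp.notMem_support_iff.mp hnot, coeff_zero]

end Twist

section Hibi

variable {k P : Type*}

theorem prod_X_eq_monomial [CommSemiring k] (I : Finset P) :
    ∏ x ∈ I, (X x : MvPolynomial P k) = monomial (∑ x ∈ I, Finsupp.single x 1) 1 :=
  (monomial_sum_one I fun x => Finsupp.single x 1).symm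

theorem sum_single_one_apply [DecidableEq P] (I : Finset P) (x : P) :
    (∑ i ∈ I, Finsupp.single i 1 : P →₀ ℕ) x = if x ∈ I then 1 else 0 := by
  simp [Finsupp.finsetSum_apply, Finsupp.single_apply]

theorem monomial_mem_adjoin_of_antitone [PartialOrder P] [CommSemiring k] (m : P →₀ ℕ) (hm : Antitone m) :
    monomial m 1 ∈ Algebra.adjoin k
      {f : MvPolynomial P k | ∃ I : Finset P, I.Nonempty ∧ IsLowerSet (I : Set P) ∧
        f = ∏ x ∈ I, X x} := by
  classical
  induction h : m.degree using Nat.strong_induction_on generalizing m with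
  | _ n ih =>
    obtain rfl | hne := eq_or_ne m 0
    · exact one_mem _
    have hind := sum_single_one_apply m.support
    set e : P →₀ ℕ := ∑ i ∈ m.support, Finsupp.single i 1
    have hle : e ≤ m := fun x => by
      rw [hind]
      split_ifs with hx
      · exact Nat.one_le_iff_ne_zero.2 (Finsupp.mem_support_iff.1 hx)
      · exact Nat.zero_le _
    have hsupp : m.support.Nonempty := Finsupp.support_nonempty_iff.2 hne
    have hadd : e + (m - e) = m := add_tsub_cancel_of_le hle
    have hdeg : 0 < e.degree := by
      obtain ⟨x, hx⟩ := hsupp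
      refine lt_of_lt_of_le ?_ (Finsupp.le_degree x e)
      simp [hind, hx]
    have hlt : (m - e).degree < n := by
      have := congrArg Finsupp.degree hadd
      rw [map_add] at this
      omega
    have hanti : Antitone (m - e) := fun x y hxy => by
      have := hm hxy
      simp only [Finsupp.tsub_apply, hind, Finsupp.mem_support_iff]
      split_ifs <;> omega
    rw [← hadd, ← one_mul (1 : k), ← monomial_mul]
    refine mul_mem (Algebra.subset_adjoin ⟨m.support, hsupp, ?_, ?_⟩) (ih _ hlt _ hanti rfl)
    · intro x y hxy hx
      have := hm hxy
      simp only [Finset.mem_coe, Finsupp.mem_support_iff] at hx ⊢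
      omega
    · rw [prod_X_eq_monomial]

theorem weight_single_sub_single [DecidableEq P] (x y : P) (m : P →₀ ℕ) :
    Finsupp.weight (Pi.single x 1 - Pi.single y 1 : P → ℤ) m = m x - m y := by
  have hsingle (z : P) : Finsupp.weight (Pi.single z 1 : P → ℤ) m = m z := by
    rw [Finsupp.weight_single_index, nsmul_one]
  rw [← hsingle x, ← hsingle y]
  simp only [Finsupp.weight_apply, Finsupp.sum, Pi.sub_apply, smul_sub, Finset.sum_sub_distrib]

theorem antitone_of_isIntegral_adjoin [PartialOrder P] [Field k] {f : MvPolynomial P k}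
    (hf : IsIntegral (Algebra.adjoin k
      {f : MvPolynomial P k | ∃ I : Finset P, I.Nonempty ∧ IsLowerSet (I : Set P) ∧
        f = ∏ x ∈ I, X x}) f) {m : P →₀ ℕ} (hm : m ∈ f.support) : Antitone m := by
  classical
  intro x y hxy
  rw [← Int.ofNat_le, ← sub_nonneg, ← weight_single_sub_single]
  refine weight_nonneg_of_isIntegral _ _ (fun g hg => ?_) hf hm
  induction hg using Algebra.adjoin_induction with
  | mem g hg =>
    obtain ⟨I, -, hI, rfl⟩ := hg
    rw [prod_X_eq_monomial, laurentTwist_monomial, weight_single_sub_single,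
      sum_single_one_apply, sum_single_one_apply]
    have hxI : y ∈ I → x ∈ I := fun h => hI hxy h
    refine ⟨Polynomial.C (monomial (∑ i ∈ I, Finsupp.single i 1) 1) * Polynomial.X ^
      ((if x ∈ I then 1 else 0) - (if y ∈ I then 1 else 0) : ℕ), ?_⟩
    rw [Polynomial.toLaurent_C_mul_X_pow, Nat.cast_sub]
    split_ifs <;> simp_all
  | algebraMap r => exact ⟨Polynomial.C (C r), by
      rw [Polynomial.toLaurent_C, AlgHom.commutes, LaurentPolynomial.algebraMap_apply,
        algebraMap_eq]⟩
  | add a b _ _ ha hb =>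
    obtain ⟨⟨p, hp⟩, q, hq⟩ := And.intro ha hb
    exact ⟨p + q, by rw [map_add, map_add, hp, hq]⟩
  | mul a b _ _ ha hb =>
    obtain ⟨⟨p, hp⟩, q, hq⟩ := And.intro ha hb
    exact ⟨p * q, by rw [map_mul, map_mul, hp, hq]⟩

end Hibi

end MvPolynomial

/-- the Hibi ring is a normal domain. -/
theorem hibi_ring_is_normal_domain
    {k : Type*} [Field k] {P : Type*} [Fintype P] [PartialOrder P]
    (x₀ : P) (hx₀ : ∀ x : P, x₀ ≤ x)
    (H : Subalgebra k (MvPolynomial P k))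
    (hH : H = Algebra.adjoin k
      {f : MvPolynomial P k | ∃ I : Finset P, I.Nonempty ∧ IsLowerSet (I : Set P) ∧
        f = ∏ x ∈ I, X x}) :
    IsDomain H ∧ IsIntegrallyClosed H := by
  refine ⟨inferInstance, ?_⟩
  have : IsIntegrallyClosedIn H (MvPolynomial P k) := by
    refine Subring.isIntegrallyClosedIn_iff.mpr ?_
    subst hH
    intro f hf
    rw [f.as_sum]
    refine sum_mem fun m hm => ?_
    rw [← mul_one (coeff m f), ← smul_eq_mul, ← smul_monomial]
    exact Subalgebra.smul_mem _
      (monomial_mem_adjoin_of_antitone m (antitone_of_isIntegral_adjoin hf hm)) _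
  exact .of_isIntegrallyClosed_of_isIntegrallyClosedIn H (MvPolynomial P k)
end

section
/- Let P be a finite poset with unique minimal element x₀ and let k be a field. The Krull dimension of the Hibi ring R_k(H) equals the cardinality of P. -/
open MvPolynomial

/-- An injective integral extension preserves the Krull dimension. -/
theorem ringKrullDim_eq_of_isIntegral_of_faithfulSMul (R S : Type*) [CommRing R] [CommRing S]
    [Algebra R S] [Algebra.IsIntegral R S] [FaithfulSMul R S] :
    ringKrullDim S = ringKrullDim R := by
  apply le_antisymm
  · exact Order.krullDim_le_of_strictMono (PrimeSpectrum.comap (algebraMap R S))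
      fun I J h ↦ Ideal.IsIntegral.comap_lt_comap (I := I.asIdeal) (J := J.asIdeal) h
  · refine iSup_le fun l ↦ ?_
    obtain ⟨Q, hQ, _⟩ := (inferInstance : Nonempty (l.head.asIdeal.primesOver S))
    obtain ⟨L, hL, -, -⟩ := Ideal.exists_ltSeries_of_hasGoingUp l Q
    exact le_iSup_of_le L (by rw [hL])

/-- The Krull dimension of a finitely generated domain over a field is its transcendence degree. -/
theorem ringKrullDim_eq_of_trdeg_eq (k A : Type*) [Field k] [CommRing A] [IsDomain A]
    [Algebra k A] [Algebra.FiniteType k A] {n : ℕ} (hn : Algebra.trdeg k A = n) :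
    ringKrullDim A = n := by
  obtain ⟨s, g, hg, hint⟩ := exists_integral_inj_algHom_of_fg k A
  algebraize [g.toRingHom]
  have : Algebra.IsIntegral (MvPolynomial (Fin s) k) A := ⟨hint⟩
  have : FaithfulSMul (MvPolynomial (Fin s) k) A :=
    (faithfulSMul_iff_algebraMap_injective _ _).mpr hg
  have hs : s = n := by
    have h := lift_trdeg_add_eq k (MvPolynomial (Fin s) k) A
    rw [trdeg_eq_zero (R := MvPolynomial (Fin s) k), hn] at h
    simpa using h
  rw [ringKrullDim_eq_of_isIntegral_of_faithfulSMul (MvPolynomial (Fin s) k) A,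
    MvPolynomial.ringKrullDim_of_isNoetherianRing, ringKrullDim_eq_zero_of_field, hs]
  simp

/-- If a subalgebra of a polynomial ring contains the product of the variables over every nonempty
lower set of a finite poset, then the polynomial ring is algebraic over it. -/
theorem MvPolynomial.isAlgebraic_of_prod_lowerSet_mem {k P : Type*} [Field k] [Fintype P]
    [PartialOrder P] (H : Subalgebra k (MvPolynomial P k))
    (hH : ∀ I : Finset P, I.Nonempty → IsLowerSet (I : Set P) →
      ∏ x ∈ I, (X x : MvPolynomial P k) ∈ H) :
    Algebra.IsAlgebraic H (MvPolynomial P k) := by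
  classical
  have hX (x : P) : IsAlgebraic H (X x : MvPolynomial P k) := by
    let lt : Finset P := {y | y < x}
    have hnot : x ∉ lt := by simp [lt]
    have hlt : ∏ y ∈ lt, (X y : MvPolynomial P k) ∈ H := by
      rcases lt.eq_empty_or_nonempty with h | h
      · simp [h, H.one_mem]
      · exact hH _ h fun a b hba ha ↦ by
          simp only [lt, Finset.coe_filter, Finset.mem_univ, true_and, Set.mem_ofPred_eq] at ha ⊢
          exact hba.trans_lt ha
    have hle : ∏ y ∈ insert x lt, (X y : MvPolynomial P k) ∈ H := by
      refine hH _ (Finset.insert_nonempty _ _) fun a b hba ha ↦ ?_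
      simp only [lt, Finset.coe_insert, Finset.coe_filter, Finset.mem_univ, true_and,
        Set.mem_insert_iff, Set.mem_ofPred_eq, ← le_iff_eq_or_lt] at ha ⊢
      exact hba.trans ha
    rw [Finset.prod_insert hnot, mul_comm] at hle
    have hne : ∏ y ∈ lt, (X y : MvPolynomial P k) ≠ 0 :=
      Finset.prod_ne_zero_iff.mpr fun y _ ↦ X_ne_zero y
    have hprod : IsAlgebraic H ((∏ y ∈ lt, X y) * X x : MvPolynomial P k) :=
      isAlgebraic_algebraMap (⟨_, hle⟩ : H)
    exact (isAlgebraic_algebraMap (⟨_, hlt⟩ : H)).of_mul (mem_nonZeroDivisors_of_ne_zero hne) hprod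
  refine ⟨fun p ↦ ?_⟩
  rw [← Subalgebra.mem_algebraicClosure]
  induction p using MvPolynomial.induction_on with
  | C a => exact isAlgebraic_algebraMap (algebraMap k H a)
  | add p q hp hq => exact add_mem hp hq
  | mul_X p x hp => exact mul_mem hp (hX x)

/-- the Krull dimension of the Hibi ring equals the cardinality of `P`. -/
theorem hibi_ring_krullDim
    {k : Type*} [Field k] {P : Type*} [Fintype P] [PartialOrder P]
    (x₀ : P) (hx₀ : ∀ x : P, x₀ ≤ x)
    (H : Subalgebra k (MvPolynomial P k))
    (hH : H = Algebra.adjoin k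
      {f : MvPolynomial P k | ∃ I : Finset P, I.Nonempty ∧ IsLowerSet (I : Set P) ∧
        f = ∏ x ∈ I, X x}) :
    ringKrullDim H = Fintype.card P := by
  have : Algebra.IsAlgebraic H (MvPolynomial P k) :=
    isAlgebraic_of_prod_lowerSet_mem H fun I hI hI' ↦ by
      rw [hH]
      exact Algebra.subset_adjoin ⟨I, hI, hI', rfl⟩
  have : Algebra.FiniteType k H := by
    rw [← Subalgebra.fg_iff_finiteType, hH]
    refine Subalgebra.fg_def.mpr ⟨_, ?_, rfl⟩
    refine (Set.finite_range fun I : Finset P ↦ ∏ x ∈ I, (X x : MvPolynomial P k)).subset ?_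
    rintro f ⟨I, -, -, rfl⟩
    exact ⟨I, rfl⟩
  refine ringKrullDim_eq_of_trdeg_eq k H ?_
  have h := trdeg_add_eq k H (A := MvPolynomial P k)
  rw [trdeg_eq_zero (R := H), MvPolynomial.trdeg_of_isDomain] at h
  simpa using h
end

section
/- Let P be a finite poset with unique minimal element x₀ and let ν be a minimal element of the poset (T(P), ≤). Then there exists a sequence y₁, x₁, …, y_t, x_t of elements of P, with the convention y_{t+1} = ∞, such that: (1) the sequence satisfies condition N; (2) ν(x_i) − ν(y_{i+1}) = rank[x_i, y_{i+1}] for all 0 ≤ i ≤ t; and (3) for every 1 ≤ i ≤ t, rank[x_i,z] + rank[z,y_{i+1}] < rank[x_i,y_{i+1}] for all z with x_i < z ≤ y_i and x_i < z ≤ y_{i+1}, and rank[x_{i−1},z] + rank[z,y_i] < rank[x_{i−1},y_i] for all z with x_{i−1} ≤ z < y_i and x_i ≤ z < y_i. -/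
/-- The rank of the interval `[x,y]`: the maximum length of a chain from `x` to `y`. -/
noncomputable def intervalRank {Q : Type*} [PartialOrder Q] (x y : Q) : ℕ :=
  sSup {n : ℕ | ∃ c : Fin (n + 1) → Q, StrictMono c ∧ c 0 = x ∧ c (Fin.last n) = y}

/-- `ν ∈ T(P)`: here `Q` plays the role of `P⁺`, with `⊤ = ∞`. -/
def IsTP {Q : Type*} [PartialOrder Q] [OrderTop Q] (ν : Q → ℕ) : Prop :=
  ν ⊤ = 0 ∧ StrictAnti ν

/-- The order on `T(P)`: `μ ≤ ν` iff `ν - μ ∈ \overline{T}(P)`, i.e. `ν - μ` is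
nonnegative and order-reversing. -/
def LeTP {Q : Type*} [PartialOrder Q] (μ ν : Q → ℕ) : Prop :=
  (∀ a : Q, μ a ≤ ν a) ∧
  (∀ a b : Q, a ≤ b → (ν b : ℤ) - (μ b : ℤ) ≤ (ν a : ℤ) - (μ a : ℤ))

/-- `ν` is a minimal element of the poset `(T(P), ≤)`. -/
def IsMinTP {Q : Type*} [PartialOrder Q] [OrderTop Q] (ν : Q → ℕ) : Prop :=
  IsTP ν ∧ ∀ μ : Q → ℕ, IsTP μ → LeTP μ ν → μ = ν

/-- Condition N (elements of the sequence lie in `P = Q ∖ {⊤}`, `x₀ = ⊥`). -/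
def CondN {Q : Type*} [PartialOrder Q] [OrderBot Q] (t : ℕ) (y x : Fin t → Q) : Prop :=
  (∀ h : 0 < t, x ⟨0, h⟩ ≠ ⊥) ∧
  (∀ i : Fin t, x i < y i) ∧
  (∀ (i : ℕ) (h₁ : i < t) (h₂ : i + 1 < t), x ⟨i, h₁⟩ < y ⟨i + 1, h₂⟩) ∧
  (∀ i j : Fin t, i < j → ¬ x j ≤ y i)

/-- `x_0 = x₀, x_1, …, x_t`: the sequence of `x`'s prefixed with the minimum. -/
def seqX {Q : Type*} (x₀ : Q) {t : ℕ} (x : Fin t → Q) : Fin (t + 1) → Q :=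
  Fin.cons x₀ x

/-- `y_1, …, y_t, y_{t+1} = ∞`: the sequence of `y`'s suffixed with `∞`. -/
def seqY {Q : Type*} (inf : Q) {t : ℕ} (y : Fin t → Q) : Fin (t + 1) → Q :=
  Fin.snoc y inf

section TightSteps

variable {Q : Type*} [PartialOrder Q] {ν : Q → ℕ}

/-- A strict increase in the poset along which `ν` drops by exactly one. -/
def UnitStep (ν : Q → ℕ) (u v : Q) : Prop :=
  u < v ∧ ν u = ν v + 1

lemma StrictAnti.add_val_le_and_unitStep_of_chain (hν : StrictAnti ν) {n : ℕ}
    {c : Fin (n + 1) → Q} (hc : StrictMono c) (i : Fin (n + 1)) :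
    ν (c i) + i ≤ ν (c 0) ∧
      (ν (c i) + i = ν (c 0) → Relation.ReflTransGen (UnitStep ν) (c 0) (c i)) := by
  induction i using Fin.induction with
  | zero => exact ⟨by simp, fun _ => .refl⟩
  | succ i ih =>
    have hlt : c i.castSucc < c i.succ := hc i.castSucc_lt_succ
    have hval := hν hlt
    simp only [Fin.val_castSucc, Fin.val_succ] at ih ⊢
    refine ⟨by omega, fun h => (ih.2 (by omega)).tail ⟨hlt, by omega⟩⟩

lemma intervalRank_set_bddAbove (hν : StrictAnti ν) (u v : Q) :
    BddAbove {n : ℕ | ∃ c : Fin (n + 1) → Q, StrictMono c ∧ c 0 = u ∧ c (Fin.last n) = v} := by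
  refine ⟨ν u, ?_⟩
  rintro n ⟨c, hc, rfl, rfl⟩
  have := (hν.add_val_le_and_unitStep_of_chain hc (Fin.last n)).1
  simp only [Fin.val_last] at this
  omega

lemma exists_chain_intervalRank (hν : StrictAnti ν) {u v : Q} (h : u ≤ v) :
    ∃ c : Fin (intervalRank u v + 1) → Q,
      StrictMono c ∧ c 0 = u ∧ c (Fin.last (intervalRank u v)) = v := by
  refine Nat.sSup_mem ?_ (intervalRank_set_bddAbove hν u v)
  rcases h.eq_or_lt with rfl | h
  · exact ⟨0, fun _ => u, fun i j hij => absurd hij (by omega), rfl, rfl⟩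
  · refine ⟨1, ![u, v], ?_, rfl, rfl⟩
    simpa [Fin.strictMono_iff_lt_succ] using h

lemma add_intervalRank_le (hν : StrictAnti ν) {u v : Q} (h : u ≤ v) :
    ν v + intervalRank u v ≤ ν u := by
  obtain ⟨c, hc, h0, h1⟩ := exists_chain_intervalRank hν h
  simpa [h0, h1] using (hν.add_val_le_and_unitStep_of_chain hc (Fin.last _)).1

lemma reflTransGen_unitStep_of_add_intervalRank_eq (hν : StrictAnti ν) {u v : Q} (h : u ≤ v)
    (heq : ν v + intervalRank u v = ν u) : Relation.ReflTransGen (UnitStep ν) u v := by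
  obtain ⟨c, hc, h0, h1⟩ := exists_chain_intervalRank hν h
  have := (hν.add_val_le_and_unitStep_of_chain hc (Fin.last _)).2
  rw [h0, h1] at this
  exact this heq

lemma add_intervalRank_eq_of_reflTransGen (hν : StrictAnti ν) {u v : Q}
    (h : Relation.ReflTransGen (UnitStep ν) u v) : ν v + intervalRank u v = ν u := by
  have hp : ∃ p : LTSeries Q, p.head = u ∧ p.last = v ∧ ν v + p.length = ν u := by
    induction h with
    | refl => exact ⟨RelSeries.singleton _ u, rfl, rfl, rfl⟩
    | tail _ hstep ih =>
      obtain ⟨p, h0, h1, hl⟩ := ih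
      refine ⟨p.snoc _ (h1 ▸ hstep.1), by simpa using h0, by simp, ?_⟩
      have := hstep.2
      simp only [RelSeries.snoc_length]
      omega
  obtain ⟨p, h0, h1, hl⟩ := hp
  have hle : p.length ≤ intervalRank u v :=
    le_csSup (intervalRank_set_bddAbove hν u v) ⟨p.toFun, p.strictMono, h0, h1⟩
  have huv : u ≤ v := h0 ▸ h1 ▸ p.head_le_last
  have := add_intervalRank_le hν huv
  omega

/-- If `z` loses nothing on a maximal tight chain from `u` to `v`, both halves are tight. -/
lemma reflTransGen_unitStep_split (hν : StrictAnti ν) {u z v : Q} (hu : u ≤ z) (hv : z ≤ v)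
    (h : Relation.ReflTransGen (UnitStep ν) u v)
    (hr : intervalRank u v ≤ intervalRank u z + intervalRank z v) :
    Relation.ReflTransGen (UnitStep ν) u z ∧ Relation.ReflTransGen (UnitStep ν) z v := by
  have := add_intervalRank_eq_of_reflTransGen hν h
  have := add_intervalRank_le hν hu
  have := add_intervalRank_le hν hv
  exact ⟨reflTransGen_unitStep_of_add_intervalRank_eq hν hu (by omega),
    reflTransGen_unitStep_of_add_intervalRank_eq hν hv (by omega)⟩

lemma lt_of_transGen_unitStep {u v : Q} (h : Relation.TransGen (UnitStep ν) u v) : u < v := by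
  induction h with
  | single h => exact h.1
  | tail _ h ih => exact ih.trans h.1

lemma add_le_add_of_reflTransGen_unitStep {d : Q → ℕ}
    (hd : ∀ u v, UnitStep ν u v → d v ≤ d u + 1) {u v : Q}
    (h : Relation.ReflTransGen (UnitStep ν) u v) : d v + ν v ≤ d u + ν u := by
  induction h with
  | refl => exact le_rfl
  | tail _ hstep ih =>
    have := hd _ _ hstep
    have := hstep.2
    omega

end TightSteps

section Reachability

variable {Q : Type*} [PartialOrder Q] [BoundedOrder Q] {ν : Q → ℕ}

/-- `ReachIn ν n v`: from `⊥` one can reach `v` by `n` unit steps upward, interleaved with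
arbitrary downward moves. -/
inductive ReachIn (ν : Q → ℕ) : ℕ → Q → Prop
  | bot : ReachIn ν 0 ⊥
  | down {n : ℕ} {u v : Q} : ReachIn ν n v → u ≤ v → ReachIn ν n u
  | up {n : ℕ} {u v : Q} : ReachIn ν n u → UnitStep ν u v → ReachIn ν (n + 1) v

lemma ReachIn.eq_bot_or_exists_unitStep {n : ℕ} {v : Q} (h : ReachIn ν n v) :
    v = ⊥ ∨ ∃ w u m, v ≤ w ∧ UnitStep ν u w ∧ ReachIn ν m u ∧ n = m + 1 := by
  induction h with
  | bot => exact .inl rfl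
  | down _ hle ih =>
    rcases ih with rfl | ⟨w, u, m, h, h'⟩
    · exact .inl (le_bot_iff.mp hle)
    · exact .inr ⟨w, u, m, hle.trans h, h'⟩
  | up h hstep _ => exact .inr ⟨_, _, _, le_rfl, hstep, h, rfl⟩

/-- Otherwise lowering `ν` by one on the reachable elements would contradict minimality. -/
lemma IsMinTP.exists_reachIn_top (hν : IsMinTP ν) : ∃ n, ReachIn ν n ⊤ := by
  classical
  by_contra htop
  obtain ⟨⟨h0, hanti⟩, hmin⟩ := hν
  have hpos : ∀ v, (∃ n, ReachIn ν n v) → 0 < ν v := fun v hv => by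
    have : v < ⊤ := lt_top_iff_ne_top.mpr (by rintro rfl; exact htop hv)
    exact (Nat.zero_le _).trans_lt (hanti this)
  have hdown : ∀ a b, a ≤ b → (∃ n, ReachIn ν n b) → ∃ n, ReachIn ν n a :=
    fun a b hab ⟨n, hn⟩ => ⟨n, hn.down hab⟩
  have hμ := hmin (fun v => if ∃ n, ReachIn ν n v then ν v - 1 else ν v) ⟨by simp [h0], ?_⟩
    ⟨?_, ?_⟩
  · have hbot : ∃ n, ReachIn ν n ⊥ := ⟨0, .bot⟩
    have := congrFun hμ ⊥
    have := hpos _ hbot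
    simp only [if_pos hbot] at *
    omega
  · intro a b hab
    have hlt := hanti hab
    have hd := hdown a b hab.le
    have hb := hpos b
    dsimp only
    split_ifs with h1 h2 h3
    · have := hb h1
      omega
    · exact absurd (hd h1) h2
    · obtain ⟨n, hn⟩ := h3
      have : ν a ≠ ν b + 1 := fun he => h1 ⟨_, hn.up ⟨hab, he⟩⟩
      omega
    · exact hlt
  · intro a
    dsimp only
    split_ifs <;> omega
  · intro a b hab
    have hd := hdown a b hab
    have ha := hpos a
    have hb := hpos b
    dsimp only
    split_ifs with h1 h2 h3
    · have := ha h2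
      have := hb h1
      omega
    · exact absurd (hd h1) h2
    · have := ha h3
      omega
    · omega

/-- The least number of unit steps needed to reach an element from `⊥`. -/
lemma IsMinTP.exists_unitStep_distance (hν : IsMinTP ν) :
    ∃ d : Q → ℕ, Monotone d ∧ d ⊥ = 0 ∧ (∀ u v, UnitStep ν u v → d v ≤ d u + 1) ∧
      ∀ v, v ≠ ⊥ → ∃ w u, v ≤ w ∧ UnitStep ν u w ∧ d w = d u + 1 ∧ d v = d w := by
  classical
  obtain ⟨N, hN⟩ := hν.exists_reachIn_top
  have hall : ∀ v, ∃ n, ReachIn ν n v := fun v => ⟨N, hN.down le_top⟩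
  have hmono : Monotone fun v => Nat.find (hall v) := fun u v huv =>
    Nat.find_min' _ ((Nat.find_spec (hall v)).down huv)
  have hstep : ∀ u v, UnitStep ν u v → Nat.find (hall v) ≤ Nat.find (hall u) + 1 :=
    fun u v huv => Nat.find_min' _ ((Nat.find_spec (hall u)).up huv)
  refine ⟨fun v => Nat.find (hall v), hmono, ?_, hstep, fun v hv => ?_⟩
  · exact Nat.le_zero.mp (Nat.find_min' _ .bot)
  · obtain ⟨w, u, m, hvw, huw, hm, heq⟩ :=
      (Nat.find_spec (hall v)).eq_bot_or_exists_unitStep.resolve_left hv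
    have h1 := hmono hvw
    have h2 := hstep u w huw
    have h3 := Nat.find_min' (hall u) hm
    dsimp only at h1 ⊢
    exact ⟨w, u, hvw, huw, by omega, by omega⟩

/-- A shortest zigzag from `⊥` to `v`, with `X i` the lower and `Y i` the upper turning points. -/
lemma exists_geodesic_zigzag {d : Q → ℕ} (hν : StrictAnti ν)
    (hback : ∀ v, v ≠ ⊥ → ∃ w u, v ≤ w ∧ UnitStep ν u w ∧ d w = d u + 1 ∧ d v = d w)
    (v : Q) (hv : ∃ u, Relation.TransGen (UnitStep ν) u v ∧ d v + ν v = d u + ν u) :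
    ∃ (t : ℕ) (X Y : ℕ → Q), X 0 = ⊥ ∧ Y t = v ∧
      (∀ i ≤ t, Relation.TransGen (UnitStep ν) (X i) (Y i) ∧
        d (Y i) + ν (Y i) = d (X i) + ν (X i)) ∧
      ∀ i < t, X (i + 1) < Y i ∧ d (X (i + 1)) = d (Y i) := by
  induction hn : d v using Nat.strong_induction_on generalizing v with
  | _ n ih =>
  obtain ⟨u, ⟨huv, hdu⟩, hmin⟩ := WellFounded.has_min (measure d).wf
    {u | Relation.TransGen (UnitStep ν) u v ∧ d v + ν v = d u + ν u} hv
  by_cases hu : u = ⊥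
  · exact ⟨0, fun _ => u, fun _ => v, hu, rfl, fun _ _ => ⟨huv, hdu⟩, by simp⟩
  obtain ⟨w, u', huw, hstep, hdw, hdeq⟩ := hback u hu
  have hval := hstep.2
  have hlt : u < w := by
    refine lt_of_le_of_ne huw ?_
    rintro rfl
    refine hmin u' ⟨.head hstep huv, by omega⟩ ?_
    change d u' < d u
    omega
  have hνuv := hν (lt_of_transGen_unitStep huv)
  obtain ⟨t, X, Y, hX, hY, hup, hdown⟩ :=
    ih (d w) (by omega) w ⟨u', .single hstep, by omega⟩ rfl
  refine ⟨t + 1, fun i => if i ≤ t then X i else u, fun i => if i ≤ t then Y i else v,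
    by simpa using hX, by simp, fun i _ => ?_, fun i hi => ?_⟩
  · by_cases h : i ≤ t
    · simpa [h] using hup i h
    · simpa [h] using ⟨huv, hdu⟩
  · rcases Nat.lt_succ_iff_lt_or_eq.mp hi with h | rfl
    · simpa [h.le, Nat.succ_le_of_lt h] using hdown i h
    · simpa [hY] using ⟨hlt, hdeq⟩

end Reachability

/-- a minimal element `ν` of `T(P)` admits a sequence with condition N
realizing the ranks, and with no "retracing" (condition (3)).  Here for `i : Fin (t+1)`,
`seqX ⊥ x i` is `x_i` (with `x_0 = x₀ = ⊥`) and `seqY ⊤ y i` is `y_{i+1}`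
(with `y_{t+1} = ∞ = ⊤`). -/
theorem minimal_TP_sequence_exists
    {Q : Type*} [Fintype Q] [PartialOrder Q] [BoundedOrder Q]
    (ν : Q → ℕ) (hν : IsMinTP ν) :
    ∃ (t : ℕ) (y x : Fin t → Q),
      (∀ i, y i ≠ ⊤) ∧ (∀ i, x i ≠ ⊤) ∧
      CondN t y x ∧
      (∀ i : Fin (t + 1),
        (ν (seqX ⊥ x i) : ℤ) - (ν (seqY ⊤ y i) : ℤ) =
          intervalRank (seqX ⊥ x i) (seqY ⊤ y i)) ∧
      (∀ i : Fin t,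
        (∀ z : Q, x i < z → z ≤ y i → z ≤ seqY ⊤ y i.succ →
          intervalRank (x i) z + intervalRank z (seqY ⊤ y i.succ) <
            intervalRank (x i) (seqY ⊤ y i.succ)) ∧
        (∀ z : Q, seqX ⊥ x i.castSucc ≤ z → x i ≤ z → z < y i →
          intervalRank (seqX ⊥ x i.castSucc) z + intervalRank z (y i) <
            intervalRank (seqX ⊥ x i.castSucc) (y i))) := by
  have hanti : StrictAnti ν := hν.1.2
  rcases eq_or_ne (⊤ : Q) ⊥ with htriv | hne
  · refine ⟨0, Fin.elim0, Fin.elim0, fun i => i.elim0, fun i => i.elim0,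
      ⟨by simp, fun i => i.elim0, by simp, fun i => i.elim0⟩, fun i => ?_, fun i => i.elim0⟩
    obtain rfl : i = 0 := Fin.fin_one_eq_zero i
    have hx : seqX (⊥ : Q) (Fin.elim0 : Fin 0 → Q) 0 = ⊥ := rfl
    have hy : seqY (⊤ : Q) (Fin.elim0 : Fin 0 → Q) 0 = ⊤ := rfl
    have := add_intervalRank_eq_of_reflTransGen (ν := ν) hanti (u := (⊥ : Q)) .refl
    rw [hx, hy, htriv]
    omega
  obtain ⟨d, hmono, hbot, hstep, hback⟩ := hν.exists_unitStep_distance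
  obtain ⟨t, X, Y, hX, hY, hup, hdown⟩ := exists_geodesic_zigzag hanti hback ⊤ <| by
    obtain ⟨w, u, hw, huw, hd, -⟩ := hback ⊤ hne
    obtain rfl := top_le_iff.mp hw
    have := huw.2
    exact ⟨u, .single huw, by omega⟩
  have hlt : ∀ i ≤ t, X i < Y i := fun i hi => lt_of_transGen_unitStep (hup i hi).1
  have hdlt : ∀ i ≤ t, d (X i) < d (Y i) := fun i hi => by
    have := hanti (hlt i hi)
    have := (hup i hi).2
    omega
  have hdY : ∀ i j, i < j → j ≤ t → d (Y i) < d (Y j) := by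
    intro i j hij
    induction j, hij using Nat.le_induction with
    | base => exact fun h => (hdown i h).2 ▸ hdlt (i + 1) h
    | succ j hij ih =>
      exact fun h => (ih (by omega)).trans ((hdown j h).2 ▸ hdlt (j + 1) h)
  have hsx : ∀ i : Fin (t + 1), seqX ⊥ (fun i : Fin t => X (i + 1)) i = X i := by
    intro i
    cases i using Fin.cases with
    | zero => exact hX.symm
    | succ i => simp [seqX]
  have hsy : ∀ i : Fin (t + 1), seqY ⊤ (fun i : Fin t => Y i) i = Y i := by
    intro i
    cases i using Fin.lastCases with
    | last => simp [seqY, hY]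
    | cast i => simp [seqY]
  refine ⟨t, fun i => Y i, fun i => X (i + 1), fun i h => ?_, fun i h => ?_,
    ⟨fun h hb => ?_, fun i => (hdown i i.2).1, fun i _ h => hlt (i + 1) h.le, fun i j hij h => ?_⟩,
    fun i => ?_, fun i => ⟨fun z hxz hzy hz => ?_, fun z hxz hz hzy => ?_⟩⟩
  · have := hdY i t i.2 le_rfl
    dsimp only at h
    rw [h, hY] at this
    exact this.false
  · exact ((hdown i i.2).1.trans_le le_top).ne h
  · have h1 := (hdown 0 h).2
    have h2 := hdlt 0 (Nat.zero_le _)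
    simp only [Nat.zero_add] at hb h1
    rw [hb, hbot] at h1
    omega
  · dsimp only at h
    have h1 := hmono h
    have h2 := (hdown j j.2).2
    have h3 := hdY i j hij j.2.le
    omega
  · rw [hsx, hsy]
    have := add_intervalRank_eq_of_reflTransGen hanti
      (hup i (Nat.lt_succ_iff.mp i.2)).1.to_reflTransGen
    omega
  · dsimp only at hxz hzy ⊢
    rw [hsy, Fin.val_succ] at *
    by_contra! hr
    obtain ⟨htight, hd⟩ := hup (i + 1) i.2
    have hsplit := reflTransGen_unitStep_split hanti hxz.le hz htight.to_reflTransGen hr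
    have h1 := add_le_add_of_reflTransGen_unitStep hstep hsplit.2
    have h2 := hmono hzy
    have h3 := (hdown i i.2).2
    have h4 := hanti hxz
    omega
  · dsimp only at hz hzy ⊢
    rw [hsx, Fin.val_castSucc] at *
    by_contra! hr
    obtain ⟨htight, hd⟩ := hup i i.2.le
    have hsplit := reflTransGen_unitStep_split hanti hxz hzy.le htight.to_reflTransGen hr
    have h1 := add_le_add_of_reflTransGen_unitStep hstep hsplit.1
    have h2 := hmono hz
    have h3 := (hdown i i.2).2
    have h4 := hanti hzy
    omega
end

section
/- Let P be a finite poset with unique minimal element x₀, let ν ∈ T(P), and let y₁, x₁, …, y_t, x_t be a sequence of elements of P satisfying condition N such that ν(x_i) − ν(y_{i+1}) = rank[x_i, y_{i+1}] for all 0 ≤ i ≤ t (with y_{t+1} = ∞). Then ν(x₀) ≤ r(y₁, x₁, …, y_t, x_t). -/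
/-- The integer `r(y₁,x₁,…,y_t,x_t)` attached to a sequence with condition N. -/
noncomputable def rSeq {Q : Type*} [PartialOrder Q] [BoundedOrder Q] (t : ℕ)
    (y x : Fin t → Q) : ℤ :=
  (∑ i : Fin t,
    ((intervalRank (seqX (⊥ : Q) x i.castSucc) (y i) : ℤ) -
      (intervalRank (x i) (y i) : ℤ))) +
  (intervalRank (seqX (⊥ : Q) x (Fin.last t)) (⊤ : Q) : ℤ)

/-- A strictly antitone `ν` drops by at least the rank along every interval. -/
theorem StrictAnti.intervalRank_add_le {Q : Type*} [PartialOrder Q] {ν : Q → ℕ}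
    (hν : StrictAnti ν) {a b : Q} (hab : a ≤ b) : intervalRank a b + ν b ≤ ν a := by
  have hle : ν b ≤ ν a := hν.antitone hab
  suffices h : intervalRank a b ≤ ν a - ν b by omega
  refine csSup_le' ?_
  rintro n ⟨c, hc, rfl, rfl⟩
  have key : ∀ i : Fin (n + 1), (i : ℕ) + ν (c i) ≤ ν (c 0) := by
    intro i
    induction i using Fin.induction with
    | zero => simp
    | succ i ih =>
      have hlt := hν (hc i.castSucc_lt_succ)
      simp only [Fin.val_castSucc, Fin.val_succ] at ih ⊢
      omega
  have hlast := key (Fin.last n)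
  simp only [Fin.val_last] at hlast
  omega

/-- if `ν ∈ T(P)` and a sequence with condition N realizes the ranks,
then `ν(x₀) ≤ r(y₁,x₁,…,y_t,x_t)`. -/
theorem nu_le_rSeq
    {Q : Type*} [Fintype Q] [PartialOrder Q] [BoundedOrder Q]
    (ν : Q → ℕ) (hν : IsTP ν) (t : ℕ) (y x : Fin t → Q)
    (hy : ∀ i, y i ≠ ⊤) (hx : ∀ i, x i ≠ ⊤)
    (hN : CondN t y x)
    (hrk : ∀ i : Fin (t + 1),
      (ν (seqX ⊥ x i) : ℤ) - (ν (seqY ⊤ y i) : ℤ) =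
        intervalRank (seqX ⊥ x i) (seqY ⊤ y i)) :
    (ν (⊥ : Q) : ℤ) ≤ rSeq t y x := by
  obtain ⟨htop, hanti⟩ := hν
  have hsum := Finset.sum_congr (rfl : (Finset.univ : Finset (Fin (t + 1))) = _)
    fun i _ => hrk i
  rw [Finset.sum_sub_distrib, Fin.sum_univ_succ, Fin.sum_univ_castSucc (n := t),
    Fin.sum_univ_castSucc (n := t)] at hsum
  simp only [seqY, Fin.snoc_castSucc, Fin.snoc_last, htop] at hsum
  have hX : ∀ i : Fin t, seqX (⊥ : Q) x i.succ = x i := fun i => Fin.cons_succ _ _ _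
  have hX0 : seqX (⊥ : Q) x 0 = ⊥ := Fin.cons_zero _ _
  simp only [hX, hX0] at hsum
  have hdrop : ∑ i : Fin t, (intervalRank (x i) (y i) : ℤ) + ∑ i : Fin t, (ν (y i) : ℤ) ≤
      ∑ i : Fin t, (ν (x i) : ℤ) := by
    rw [← Finset.sum_add_distrib]
    exact Finset.sum_le_sum fun i _ => by
      exact_mod_cast hanti.intervalRank_add_le (hN.2.1 i).le
  rw [rSeq, Finset.sum_sub_distrib]
  push_cast at hsum
  linarith
end

section
/- Let P be a finite poset with unique minimal element x₀, let ν ∈ T(P), and let y₁, x₁, …, y_t, x_t be a sequence of elements of P satisfying the three conditions: (1) the sequence satisfies condition N; (2) ν(x_i) − ν(y_{i+1}) = rank[x_i,y_{i+1}] for 0 ≤ i ≤ t (with y_{t+1} = ∞); (3) for all 1 ≤ i ≤ t, rank[x_i,z] + rank[z,y_{i+1}] < rank[x_i,y_{i+1}] for all z with x_i < z ≤ y_i and x_i < z ≤ y_{i+1}, and rank[x_{i−1},z] + rank[z,y_i] < rank[x_{i−1},y_i] for all z with x_{i−1} ≤ z < y_i and x_i ≤ z < y_i. For 0 ≤ i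 ≤ t choose a saturated chain x_i = α_{i,0} ⋖ α_{i,1} ⋖ ⋯ ⋖ α_{i,u_i} = y_{i+1} with u_i = rank[x_i,y_{i+1}], and for 1 ≤ i ≤ t choose a saturated chain x_i = β_{i,0} ⋖ β_{i,1} ⋖ ⋯ ⋖ β_{i,v_i} = y_i with v_i = rank[x_i,y_i]. Then the elements α_{0,0}, …, α_{0,u₀}, β_{1,1}, …, β_{1,v₁−1}, α_{1,0}, …, α_{1,u₁}, β_{2,1}, …, β_{2,v₂−1}, …, α_{t−1,0}, …, α_{t−1,u_{t−1}}, β_{t,1}, …, β_{t,v_t−1}, α_{t,0}, …, α_{t,u_t} are pairwise distinct elements of P⁺. -/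
/-- A chain from its first to its last element bounds the rank of the interval from below. -/
theorem StrictMono.le_intervalRank {Q : Type*} [Fintype Q] [PartialOrder Q] {n : ℕ}
    {c : Fin (n + 1) → Q} (hc : StrictMono c) :
    n ≤ intervalRank (c 0) (c (Fin.last n)) := by
  refine le_csSup ⟨Fintype.card Q, ?_⟩ ⟨c, hc, rfl, rfl⟩
  rintro m ⟨d, hd, -, -⟩
  have := Fintype.card_le_of_injective d hd.injective
  rw [Fintype.card_fin] at this
  omega

/-- Splitting a chain at one of its elements bounds the sum of the two ranks from below. -/
theorem StrictMono.le_intervalRank_add_intervalRank {Q : Type*} [Fintype Q] [PartialOrder Q]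
    {n : ℕ} {c : Fin (n + 1) → Q} (hc : StrictMono c) (k : Fin (n + 1)) :
    n ≤ intervalRank (c 0) (c k) + intervalRank (c k) (c (Fin.last n)) := by
  obtain ⟨k, hk⟩ := k
  obtain ⟨m, rfl⟩ := Nat.exists_eq_add_of_le (Nat.lt_succ_iff.mp hk)
  have lower : StrictMono fun a : Fin (k + 1) => c ⟨a, by omega⟩ := fun a b h => hc h
  have upper : StrictMono fun a : Fin (m + 1) => c ⟨k + a, by omega⟩ := fun a b h =>
    hc (Nat.add_lt_add_left h k)
  exact Nat.add_le_add lower.le_intervalRank upper.le_intervalRank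

/-- the elements of the concatenation of saturated chains
`α_{i,0},…,α_{i,u_i}` (from `x_i` to `y_{i+1}`, `0 ≤ i ≤ t`) and
`β_{i,1},…,β_{i,v_i−1}` (interior of saturated chains from `x_i` to `y_i`,
`1 ≤ i ≤ t`) are pairwise distinct. -/
theorem saturated_chains_pairwise_distinct
    {Q : Type*} [Fintype Q] [PartialOrder Q] [BoundedOrder Q]
    (ν : Q → ℕ) (hν : IsTP ν) (t : ℕ) (y x : Fin t → Q)
    (hy : ∀ i, y i ≠ ⊤) (hx : ∀ i, x i ≠ ⊤)
    (hN : CondN t y x)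
    (hrk : ∀ i : Fin (t + 1),
      (ν (seqX ⊥ x i) : ℤ) - (ν (seqY ⊤ y i) : ℤ) =
        intervalRank (seqX ⊥ x i) (seqY ⊤ y i))
    (hnoret : ∀ i : Fin t,
      (∀ z : Q, x i < z → z ≤ y i → z ≤ seqY ⊤ y i.succ →
        intervalRank (x i) z + intervalRank z (seqY ⊤ y i.succ) <
          intervalRank (x i) (seqY ⊤ y i.succ)) ∧
      (∀ z : Q, seqX ⊥ x i.castSucc ≤ z → x i ≤ z → z < y i →
        intervalRank (seqX ⊥ x i.castSucc) z + intervalRank z (y i) <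
          intervalRank (seqX ⊥ x i.castSucc) (y i)))
    (u : Fin (t + 1) → ℕ)
    (hu : ∀ i, u i = intervalRank (seqX ⊥ x i) (seqY ⊤ y i))
    (α : (i : Fin (t + 1)) → Fin (u i + 1) → Q)
    (hα₀ : ∀ i, α i 0 = seqX ⊥ x i)
    (hαlast : ∀ i, α i (Fin.last (u i)) = seqY ⊤ y i)
    (hαcov : ∀ (i : Fin (t + 1)) (j : Fin (u i)), α i j.castSucc ⋖ α i j.succ)
    (v : Fin t → ℕ)
    (hv : ∀ i, v i = intervalRank (x i) (y i))
    (β : (i : Fin t) → Fin (v i + 1) → Q)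
    (hβ₀ : ∀ i, β i 0 = x i)
    (hβlast : ∀ i, β i (Fin.last (v i)) = y i)
    (hβcov : ∀ (i : Fin t) (j : Fin (v i)), β i j.castSucc ⋖ β i j.succ) :
    Function.Injective
      (Sum.elim
        (fun p : Σ i : Fin (t + 1), Fin (u i + 1) => α p.1 p.2)
        (fun p : Σ i : Fin t, Fin (v i - 1) =>
          β p.1 ⟨p.2.1 + 1, by have := p.2.2; omega⟩)) := by
  obtain ⟨-, hxy, -, hN⟩ := hN
  have seqX_succ (j : Fin t) : seqX ⊥ x j.succ = x j := Fin.cons_succ _ _ _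
  have seqY_castSucc (j : Fin t) : seqY ⊤ y j.castSucc = y j := Fin.snoc_castSucc _ _ _
  have hαmono (i) : StrictMono (α i) := Fin.strictMono_iff_lt_succ.mpr fun j => (hαcov i j).lt
  have hβmono (i) : StrictMono (β i) := Fin.strictMono_iff_lt_succ.mpr fun j => (hβcov i j).lt
  have hαle (i k) : seqX ⊥ x i ≤ α i k := hα₀ i ▸ (hαmono i).monotone (Fin.zero_le k)
  have hαge (i k) : α i k ≤ seqY ⊤ y i := hαlast i ▸ (hαmono i).monotone (Fin.le_last k)
  have interior_lt (j) (k : Fin (v j - 1)) : k.val + 1 < v j + 1 :=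
    Nat.succ_lt_succ (k.2.trans_le (Nat.sub_le _ _))
  have hβlt (j) (k : Fin (v j - 1)) : x j < β j ⟨k.val + 1, interior_lt j k⟩ :=
    hβ₀ j ▸ hβmono j (Nat.succ_pos k)
  have hβgt (j) (k : Fin (v j - 1)) : β j ⟨k.val + 1, interior_lt j k⟩ < y j :=
    hβlast j ▸ hβmono j (Fin.lt_def.mpr (by have := k.2; simp only [Fin.val_last]; omega))
  have hrank (i k) : intervalRank (seqX ⊥ x i) (seqY ⊤ y i) ≤
      intervalRank (seqX ⊥ x i) (α i k) + intervalRank (α i k) (seqY ⊤ y i) := by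
    simpa only [hα₀, hαlast, hu i] using (hαmono i).le_intervalRank_add_intervalRank k
  have le_of_le_seqY (i : Fin (t + 1)) (j : Fin t) (h : x j ≤ seqY ⊤ y i) : j.val ≤ i.val := by
    by_contra! hlt
    obtain ⟨i, rfl⟩ := Fin.exists_castSucc_eq.mpr (Fin.ne_of_lt (b := Fin.last t) (a := i)
      (Fin.lt_def.mpr (by simp only [Fin.val_last]; omega)))
    exact hN i j hlt (seqY_castSucc i ▸ h)
  have le_of_seqX_le (i : Fin (t + 1)) (j : Fin t) (h : seqX ⊥ x i ≤ y j) :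
      i.val ≤ j.val + 1 := by
    by_contra! hlt
    obtain ⟨i, rfl⟩ := Fin.exists_succ_eq.mpr (show i ≠ 0 by rintro rfl; simp at hlt)
    exact hN j i (Fin.lt_def.mpr (by simpa using hlt)) (seqX_succ i ▸ h)
  have not_le_y (j : Fin t) (k) (h : x j < α j.succ k) : ¬ α j.succ k ≤ y j := fun h' =>
    ((hnoret j).1 _ h h' (hαge _ k)).not_ge (seqX_succ j ▸ hrank j.succ k)
  have not_lt_y (j : Fin t) (k) (h : x j ≤ α j.castSucc k) : ¬ α j.castSucc k < y j := fun h' =>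
    ((hnoret j).2 _ (hαle _ k) h h').not_ge (seqY_castSucc j ▸ hrank j.castSucc k)
  have α_ne_α (i i' : Fin (t + 1)) (k k') (hlt : i < i') : α i k ≠ α i' k' := by
    intro h
    obtain ⟨j, rfl⟩ := Fin.exists_succ_eq.mpr (Fin.ne_zero_of_lt hlt)
    have hx' : x j ≤ α i k := h ▸ seqX_succ j ▸ hαle j.succ k'
    have hji := le_of_le_seqY i j (hx'.trans (hαge i k))
    obtain rfl : i = j.castSucc := Fin.ext (by
      have := Fin.lt_def.mp hlt
      simp only [Fin.val_succ, Fin.val_castSucc] at *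
      omega)
    have hle : α j.castSucc k ≤ y j := seqY_castSucc j ▸ hαge j.castSucc k
    have heq := hle.eq_of_not_lt (not_lt_y j k hx')
    exact not_le_y j k' (h ▸ heq ▸ hxy j) (h ▸ hle)
  have α_ne_β (i : Fin (t + 1)) (k) (j : Fin t) (k' : Fin (v j - 1)) :
      α i k ≠ β j ⟨k'.val + 1, interior_lt _ k'⟩ := by
    intro h
    have hlt : x j < α i k := h ▸ hβlt j k'
    have hgt : α i k < y j := h ▸ hβgt j k'
    have hji := le_of_le_seqY i j (hlt.le.trans (hαge i k))
    have hij := le_of_seqX_le i j ((hαle i k).trans hgt.le)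
    rcases hji.eq_or_lt with hji | hji
    · obtain rfl : i = j.castSucc := Fin.ext hji.symm
      exact not_lt_y j k hlt.le hgt
    · obtain rfl : i = j.succ := Fin.ext (le_antisymm hij hji)
      exact not_le_y j k hlt hgt.le
  have β_ne_β (j j' : Fin t) (k : Fin (v j - 1)) (k' : Fin (v j' - 1)) (hlt : j < j') :
      β j ⟨k.val + 1, interior_lt j k⟩ ≠ β j' ⟨k'.val + 1, interior_lt _ k'⟩ := fun h =>
    hN j j' hlt ((hβlt j' k').le.trans (h ▸ (hβgt j k).le))
  refine Function.Injective.sumElim ?_ ?_ fun p q => α_ne_β p.1 p.2 q.1 q.2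
  · rintro ⟨i, k⟩ ⟨i', k'⟩ h
    rcases lt_trichotomy i i' with hlt | rfl | hlt
    · exact absurd h (α_ne_α i i' k k' hlt)
    · exact congrArg (Sigma.mk i) ((hαmono i).injective h)
    · exact absurd h.symm (α_ne_α i' i k' k hlt)
  · rintro ⟨j, k⟩ ⟨j', k'⟩ h
    rcases lt_trichotomy j j' with hlt | rfl | hlt
    · exact absurd h (β_ne_β j j' k k' hlt)
    · have := congrArg Fin.val ((hβmono j).injective h)
      exact congrArg (Sigma.mk j) (Fin.ext (Nat.succ_injective this))
    · exact absurd h.symm (β_ne_β j' j k' k hlt)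
end

section
/- Let P⁺ be a poset of type (b) with parameters m ≥ 3, n, n′ ≥ 0 and 1 ≤ i₁ < ⋯ < i_p ≤ m−1. Then rank P⁺ = n + m + n′ + 1 =: r, and for all α₁ ≤ α₂ in P⁺ one has rank[x₀,α₁] + rank[α₁,α₂] + rank[α₂,∞] < r if and only if (α₁, α₂) = (z′₁, z_m). In particular rank[x₀,x] + rank[x,∞] = r for every x ∈ P⁺. -/
/-- The covering relations of a poset of type (b) with parameters
`m ≥ 3`, `n, n' ≥ 0` and `1 ≤ ι 0 < ⋯ < ι (p-1) ≤ m − 1` (1-based indices `i_j = ι j`). -/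
def TypeBCovers {Q : Type*} (m n n' p : ℕ) (hm : 3 ≤ m)
    (z z' : Fin m → Q) (w : Fin (n + 1) → Q) (w' : Fin (n' + 1) → Q)
    (ι : Fin p → ℕ) (a b : Q) : Prop :=
  (∃ i : Fin n, a = w i.castSucc ∧ b = w i.succ) ∨
  (∃ i : Fin n', a = w' i.castSucc ∧ b = w' i.succ) ∨
  (a = w (Fin.last n) ∧ b = z ⟨0, by omega⟩) ∨
  (a = w (Fin.last n) ∧ b = z' ⟨0, by omega⟩) ∨
  (∃ (i : ℕ) (h : i + 1 < m), a = z ⟨i, by omega⟩ ∧ b = z ⟨i + 1, h⟩) ∨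
  (∃ (i : ℕ) (h : i + 1 < m), a = z' ⟨i, by omega⟩ ∧ b = z' ⟨i + 1, h⟩) ∨
  (a = z ⟨m - 1, by omega⟩ ∧ b = w' 0) ∨
  (a = z' ⟨m - 1, by omega⟩ ∧ b = w' 0) ∨
  (a = z' ⟨0, by omega⟩ ∧ b = z ⟨m - 1, by omega⟩) ∨
  (∃ (j : Fin p) (a' b' : Fin m),
    (a' : ℕ) + 1 = ι j ∧ (b' : ℕ) = ι j ∧ a = z a' ∧ b = z' b')

open Relation

/-- A strictly increasing sequence of naturals grows at least as fast as its index. -/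
lemma val_add_apply_zero_le {k : ℕ} {f : Fin (k + 1) → ℕ} (hf : StrictMono f) (i : Fin (k + 1)) :
    (i : ℕ) + f 0 ≤ f i := by
  induction i using Fin.induction with
  | zero => simp
  | succ i ih =>
    have := hf (Fin.castSucc_lt_succ (i := i))
    simp only [Fin.val_castSucc, Fin.val_succ] at *
    omega

/-- A path whose steps raise the height by one yields a chain whose length is the height
difference. -/
lemma exists_chain_of_reflTransGen {Q : Type*} [PartialOrder Q] {h : Q → ℕ} {a b : Q}
    (hab : ReflTransGen (fun x y => x ⋖ y ∧ h y = h x + 1) a b) :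
    ∃ k, k + h a = h b ∧
      ∃ c : Fin (k + 1) → Q, StrictMono c ∧ c 0 = a ∧ c (Fin.last k) = b := by
  induction hab with
  | refl => exact ⟨0, by simp, fun _ => a, fun i j hij => absurd hij (by omega), rfl, rfl⟩
  | @tail d e _ hde ih =>
    obtain ⟨k, hk, c, hc, h0, hl⟩ := ih
    refine ⟨k + 1, by omega, Fin.snoc c e, ?_, ?_, by simp⟩
    · rw [Fin.strictMono_iff_lt_succ]
      intro i
      induction i using Fin.lastCases with
      | last =>
        rw [Fin.snoc_castSucc, Fin.succ_last, Fin.snoc_last, hl]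
        exact hde.1.lt
      | cast i =>
        rw [Fin.snoc_castSucc, Fin.succ_castSucc, Fin.snoc_castSucc]
        exact hc Fin.castSucc_lt_succ
    · rw [← Fin.castSucc_zero, Fin.snoc_castSucc, h0]

/-- The interval rank is the height difference when some path raises the height by one at
each step. -/
lemma intervalRank_add_of_reflTransGen {Q : Type*} [PartialOrder Q] {h : Q → ℕ}
    (hh : StrictMono h) {a b : Q}
    (hab : ReflTransGen (fun x y => x ⋖ y ∧ h y = h x + 1) a b) :
    intervalRank a b + h a = h b := by
  obtain ⟨k, hk, hc⟩ := exists_chain_of_reflTransGen hab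
  have hmax : IsGreatest
      {n : ℕ | ∃ c : Fin (n + 1) → Q, StrictMono c ∧ c 0 = a ∧ c (Fin.last n) = b} k := by
    refine ⟨hc, ?_⟩
    rintro l ⟨c, hc, h0, hl⟩
    have := val_add_apply_zero_le (hh.comp hc) (Fin.last l)
    simp only [Function.comp_apply, h0, hl, Fin.val_last] at this
    omega
  rw [intervalRank, hmax.csSup_eq, hk]

/-- The interval between an element and a cover of it has rank at most one. -/
lemma intervalRank_le_one_of_covBy {Q : Type*} [PartialOrder Q] {a b : Q} (hab : a ⋖ b) :
    intervalRank a b ≤ 1 := by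
  refine csSup_le' ?_
  rintro l ⟨c, hc, rfl, rfl⟩
  by_contra! hl
  have h1 : (0 : Fin (l + 1)) < ⟨1, by omega⟩ := by simp [Fin.lt_def]
  have h2 : (⟨1, by omega⟩ : Fin (l + 1)) < Fin.last l := by simpa [Fin.lt_def] using hl
  exact hab.2 (hc h1) (hc h2)

/-- Consecutive related terms of a finite sequence are joined by a path. -/
lemma reflTransGen_of_fin {Q : Type*} {R : Q → Q → Prop} {m : ℕ} (f : Fin m → Q)
    (hf : ∀ (i : ℕ) (h : i + 1 < m), R (f ⟨i, by omega⟩) (f ⟨i + 1, h⟩)) (i : ℕ) (hi : i < m) :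
    ReflTransGen R (f ⟨0, by omega⟩) (f ⟨i, hi⟩) := by
  induction i with
  | zero => exact .refl
  | succ i ih => exact (ih (by omega)).tail (hf i hi)

/-- A height function on a set that is the disjoint union of four finite sequences. -/
lemma exists_typeB_height {Q : Type*} {m n n' : ℕ}
    {z z' : Fin m → Q} {w : Fin (n + 1) → Q} {w' : Fin (n' + 1) → Q}
    (hbij : Function.Bijective
      (Sum.elim (Sum.elim z z') (Sum.elim w w') :
        (Fin m ⊕ Fin m) ⊕ (Fin (n + 1) ⊕ Fin (n' + 1)) → Q)) :
    ∃ h : Q → ℕ, (∀ i, h (z i) = n + 1 + i) ∧ (∀ i, h (z' i) = n + 1 + i) ∧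
      (∀ i, h (w i) = i) ∧ ∀ i, h (w' i) = n + 1 + m + i := by
  let e := Equiv.ofBijective _ hbij
  let g : (Fin m ⊕ Fin m) ⊕ (Fin (n + 1) ⊕ Fin (n' + 1)) → ℕ :=
    Sum.elim (Sum.elim (fun i => n + 1 + i) fun i => n + 1 + i)
      (Sum.elim (fun i => i) fun i => n + 1 + m + i)
  have hg : ∀ s, g (e.symm (e s)) = g s := fun s => by rw [e.symm_apply_apply]
  exact ⟨fun q => g (e.symm q), fun i => hg (.inl (.inl i)), fun i => hg (.inl (.inr i)),
    fun i => hg (.inr (.inl i)), fun i => hg (.inr (.inr i))⟩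

/-- in a poset of type (b), `rank P⁺ = n + m + n' + 1 = r`; for
`α₁ ≤ α₂` the strict inequality
`rank[x₀,α₁] + rank[α₁,α₂] + rank[α₂,∞] < r` holds iff `(α₁,α₂) = (z'₁, z_m)`;
in particular `rank[x₀,x] + rank[x,∞] = r` for every `x`. -/
theorem typeB_rank_characterization
    {Q : Type*} [Fintype Q] [PartialOrder Q]
    (m n n' p : ℕ) (hm : 3 ≤ m)
    (z z' : Fin m → Q) (w : Fin (n + 1) → Q) (w' : Fin (n' + 1) → Q)
    (ι : Fin p → ℕ)
    (hι₁ : ∀ j, 1 ≤ ι j) (hι₂ : ∀ j, ι j ≤ m - 1) (hιmono : StrictMono ι)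
    (hbij : Function.Bijective
      (Sum.elim (Sum.elim z z') (Sum.elim w w') :
        (Fin m ⊕ Fin m) ⊕ (Fin (n + 1) ⊕ Fin (n' + 1)) → Q))
    (hcov : ∀ a b : Q, a ⋖ b ↔ TypeBCovers m n n' p hm z z' w w' ι a b)
    (hbot : ∀ q : Q, w 0 ≤ q)
    (htop : ∀ q : Q, q ≤ w' (Fin.last n')) :
    intervalRank (w 0) (w' (Fin.last n')) = n + m + n' + 1 ∧
    (∀ a₁ a₂ : Q, a₁ ≤ a₂ →
      (intervalRank (w 0) a₁ + intervalRank a₁ a₂ + intervalRank a₂ (w' (Fin.last n')) <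
          n + m + n' + 1 ↔
        (a₁ = z' ⟨0, by omega⟩ ∧ a₂ = z ⟨m - 1, by omega⟩))) ∧
    (∀ q : Q,
      intervalRank (w 0) q + intervalRank q (w' (Fin.last n')) = n + m + n' + 1) := by
  classical
  obtain ⟨h, hz, hz', hw, hw'⟩ := exists_typeB_height hbij
  have hne : ∀ i j, z i ≠ z' j := fun i j he => by
    have := hbij.1 (a₁ := .inl (.inl i)) (a₂ := .inl (.inr j)) he
    simp at this
  let G : Q → Q → Prop := fun x y => x ⋖ y ∧ h y = h x + 1
  let u : Q := z' ⟨0, by omega⟩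
  let v : Q := z ⟨m - 1, by omega⟩
  have hu : h u = n + 1 := hz' _
  have hv : h v = n + m := by rw [hz]; simp only; omega
  have huv : u ⋖ v := (hcov _ _).2 <| by unfold TypeBCovers; simp [u, v]
  have hstep : ∀ a b, a ⋖ b → G a b ∨ (a = u ∧ b = v) := by
    intro a b hab
    rcases (hcov a b).1 hab with ⟨i, rfl, rfl⟩ | ⟨i, rfl, rfl⟩ | ⟨rfl, rfl⟩ | ⟨rfl, rfl⟩ |
      ⟨i, hi, rfl, rfl⟩ | ⟨i, hi, rfl, rfl⟩ | ⟨rfl, rfl⟩ | ⟨rfl, rfl⟩ | ⟨rfl, rfl⟩ |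
      ⟨j, a', b', ha, hb, rfl, rfl⟩
    all_goals first
      | exact .inr ⟨rfl, rfl⟩
      | refine .inl ⟨hab, ?_⟩
        simp only [hz, hz', hw, hw', Fin.val_castSucc, Fin.val_succ, Fin.val_last, Fin.val_zero]
        try omega
  have hstrict : StrictMono h := by
    let : LocallyFiniteOrder Q := Fintype.toLocallyFiniteOrder
    have hcovlt : ∀ a b, a ⋖ b → h a < h b := by
      intro a b hab
      rcases hstep _ _ hab with hG | ⟨rfl, rfl⟩
      · have := hG.2; omega
      · omega
    intro a b hab
    have hgen := lt_iff_transGen_covBy.1 hab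
    clear hab
    induction hgen with
    | single hab => exact hcovlt _ _ hab
    | tail _ hcb ih => exact ih.trans (hcovlt _ _ hcb)
  have hzstep : ∀ (i : ℕ) (hi : i + 1 < m), G (z ⟨i, by omega⟩) (z ⟨i + 1, hi⟩) := fun i hi =>
    ⟨(hcov _ _).2 (.inr <| .inr <| .inr <| .inr <| .inl ⟨i, hi, rfl, rfl⟩), by
      simp only [hz]; omega⟩
  have hz'step : ∀ (i : ℕ) (hi : i + 1 < m), G (z' ⟨i, by omega⟩) (z' ⟨i + 1, hi⟩) := fun i hi =>
    ⟨(hcov _ _).2 (.inr <| .inr <| .inr <| .inr <| .inr <| .inl ⟨i, hi, rfl, rfl⟩), by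
      simp only [hz']; omega⟩
  have hwv : ReflTransGen G (w (Fin.last n)) v := by
    refine .head ⟨(hcov _ _).2 (.inr <| .inr <| .inl ⟨rfl, rfl⟩), ?_⟩
      (reflTransGen_of_fin z hzstep (m - 1) (by omega))
    simp [hz, hw]
  have huw' : ReflTransGen G u (w' 0) := by
    refine .tail (reflTransGen_of_fin z' hz'step (m - 1) (by omega))
      ⟨(hcov _ _).2 (.inr <| .inr <| .inr <| .inr <| .inr <| .inr <| .inr <| .inl ⟨rfl, rfl⟩), ?_⟩
    simp only [hz', hw', Fin.val_zero]
    omega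
  have hbelow : ∀ d, G d u → d = w (Fin.last n) := by
    rintro d ⟨hd, -⟩
    have hz'inj : ∀ i, u = z' i → i.val = 0 := fun i hi => by
      have := congrArg h hi
      rw [hu, hz'] at this
      omega
    rcases (hcov d u).1 hd with ⟨i, -, he⟩ | ⟨i, -, he⟩ | ⟨-, he⟩ | ⟨hd, -⟩ |
      ⟨i, hi, -, he⟩ | ⟨i, hi, -, he⟩ | ⟨-, he⟩ | ⟨-, he⟩ | ⟨-, he⟩ | ⟨j, a', b', ha, hb, -, he⟩
    case inr.inr.inr.inl => exact hd
    all_goals exfalso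
    all_goals first
      | exact hne _ _ he.symm
      | have := hz'inj _ he
        dsimp only at this
        omega
      | exact absurd (hz'inj _ he) (by omega)
      | have := congrArg h he
        rw [hu] at this
        simp only [hw, hw', Fin.val_succ, Fin.val_zero] at this
        omega
  have habove : ∀ c, v ⋖ c → c = w' 0 := by
    intro c hc
    rcases (hcov v c).1 hc with ⟨i, he, -⟩ | ⟨i, he, -⟩ | ⟨he, -⟩ | ⟨he, -⟩ |
      ⟨i, hi, he, -⟩ | ⟨i, hi, he, -⟩ | ⟨-, he⟩ | ⟨he, -⟩ | ⟨he, -⟩ | ⟨j, a', b', ha, hb, he, -⟩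
    case inr.inr.inr.inr.inr.inr.inl => exact he
    all_goals exfalso
    all_goals first
      | exact hne _ _ he
      | have := congrArg h he
        rw [hv] at this
        simp only [hw, hw', hz, Fin.val_castSucc, Fin.val_last] at this
        omega
  have hpath : ∀ a b, a ≤ b → ReflTransGen G a b ∨ (a = u ∧ b = v) := by
    let : LocallyFiniteOrder Q := Fintype.toLocallyFiniteOrder
    intro a b hab
    have hgen := le_iff_reflTransGen_covBy.1 hab
    clear hab
    induction hgen with
    | refl => exact .inl .refl
    | @tail c d _ hcd ih =>
      rcases ih with ih | ⟨rfl, rfl⟩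
      · rcases hstep c d hcd with hG | ⟨rfl, rfl⟩
        · exact .inl (ih.tail hG)
        · rcases ih.cases_tail with he | ⟨e, hae, heu⟩
          · exact .inr ⟨he.symm, rfl⟩
          · rw [hbelow e heu] at hae
            exact .inl (hae.trans hwv)
      · rw [habove d hcd]
        exact .inl huw'
  have hrank : ∀ a b, a ≤ b → ¬ (a = u ∧ b = v) → intervalRank a b + h a = h b :=
    fun a b hab hn => intervalRank_add_of_reflTransGen hstrict ((hpath a b hab).resolve_right hn)
  have hbot_rank : ∀ q, intervalRank (w 0) q = h q := fun q => by
    have := hrank (w 0) q (hbot q) fun he => by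
      have := congrArg h he.1
      rw [hu, hw] at this
      simp at this
    simpa [hw] using this
  have htop_rank : ∀ q, intervalRank q (w' (Fin.last n')) + h q = n + m + n' + 1 := fun q => by
    rw [hrank q _ (htop q), hw', Fin.val_last]
    · omega
    · intro he
      have := congrArg h he.2
      rw [hv, hw'] at this
      omega
  refine ⟨?_, fun a b hab => ?_, fun q => ?_⟩
  · rw [hbot_rank, hw', Fin.val_last]; omega
  · have hb := htop_rank b
    rw [hbot_rank]
    refine ⟨fun hlt => ?_, ?_⟩
    · by_contra hn
      have := hrank a b hab hn
      omega
    · rintro ⟨rfl, rfl⟩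
      have := intervalRank_le_one_of_covBy huv
      change h u + intervalRank u v + intervalRank v _ < _
      change intervalRank v _ + h v = _ at hb
      omega
  · have := htop_rank q
    rw [hbot_rank]
    omega
end

section
/- Let P⁺ be a poset of type (b) with parameters m ≥ 3, n, n′ ≥ 0 and 1 ≤ i₁ < ⋯ < i_p ≤ m−1, and set P = P⁺ ∖ {∞}. For 1 ≤ h ≤ m−1 define ν_h : P⁺ → ℕ by ν_h(x) = rank[x,∞] if x ∈ [z′₁,∞] ∖ {z_m}, and ν_h(x) = rank[x,∞] + m − 1 − h otherwise. Then each ν_h is a minimal element of the poset (T(P), ≤), these are pairwise distinct, and every minimal element of (T(P), ≤) equals some ν_h; thus (T(P), ≤) has exactly m − 1 minimal elements. -/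
/-- `ν ∈ T(P)` where `inf` plays the role of `∞` (the maximum of `P⁺`). -/
def IsTPAt {Q : Type*} [PartialOrder Q] (inf : Q) (ν : Q → ℕ) : Prop :=
  ν inf = 0 ∧ StrictAnti ν

/-- `ν` is a minimal element of the poset `(T(P), ≤)`. -/
def IsMinTPAt {Q : Type*} [PartialOrder Q] (inf : Q) (ν : Q → ℕ) : Prop :=
  IsTPAt inf ν ∧ ∀ μ : Q → ℕ, IsTPAt inf μ → LeTP μ ν → μ = ν

/-- The function `ν_h` on a poset of type (a) or (b): `ν_h(x) = rank[x,∞]` for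
`x ∈ [z'₁,∞] ∖ {z_m}` and `ν_h(x) = rank[x,∞] + m − 1 − h` otherwise. -/
noncomputable def nuH {Q : Type*} [PartialOrder Q] [DecidableEq Q]
    [DecidableRel ((· ≤ ·) : Q → Q → Prop)]
    (m n' h : ℕ) (hm : 3 ≤ m) (z z' : Fin m → Q) (w' : Fin (n' + 1) → Q) : Q → ℕ :=
  fun q =>
    if z' ⟨0, by omega⟩ ≤ q ∧ q ≠ z ⟨m - 1, by omega⟩ then
      intervalRank q (w' (Fin.last n'))
    else
      intervalRank q (w' (Fin.last n')) + (m - 1 - h)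

/-- A strictly antitone `ℕ`-valued function drops by at least one at each step of a chain. -/
lemma StrictAnti.add_sub_le_of_fin {k : ℕ} {f : Fin k → ℕ} (hf : StrictAnti f) {i j : Fin k}
    (hij : i ≤ j) : f j + (j - i : ℕ) ≤ f i := by
  obtain ⟨j, hj⟩ := j
  induction j with
  | zero => simpa using hf.antitone hij
  | succ j ih =>
    rcases hij.eq_or_lt with rfl | hlt
    · simp
    · have hij' : (i : ℕ) < j + 1 := hlt
      have h₁ := ih (by omega) (show (i : ℕ) ≤ j by omega)
      have h₂ := hf (show (⟨j, by omega⟩ : Fin k) < ⟨j + 1, hj⟩ from Nat.lt_succ_self j)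
      dsimp only at h₁ ⊢
      omega

lemma Fin.strictMono_of_lt_add_one {α : Type*} [Preorder α] {k : ℕ} {f : Fin k → α}
    (hf : ∀ (i : ℕ) (h : i + 1 < k), f ⟨i, by omega⟩ < f ⟨i + 1, h⟩) : StrictMono f := by
  cases k with
  | zero => exact fun i => i.elim0
  | succ k => exact Fin.strictMono_iff_lt_succ.2 fun i => hf i (by omega)

/-- A strictly antitone function which vanishes at `t` and can be lowered by exactly one from
every other element computes the rank of the intervals `[x, t]`. -/
lemma intervalRank_eq_of_strictAnti {Q : Type*} [PartialOrder Q] {t : Q} {r : Q → ℕ}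
    (hr : StrictAnti r) (ht : r t = 0) (hstep : ∀ q, q ≠ t → ∃ b, q < b ∧ r q = r b + 1) (q : Q) :
    intervalRank q t = r q := by
  have hgreatest : IsGreatest
      {n : ℕ | ∃ c : Fin (n + 1) → Q, StrictMono c ∧ c 0 = q ∧ c (Fin.last n) = t} (r q) := by
    constructor
    · obtain ⟨k, hk⟩ : ∃ k, r q = k := ⟨_, rfl⟩
      rw [hk]
      induction k generalizing q with
      | zero =>
        have hq : q = t := by
          by_contra hne
          obtain ⟨b, -, hb⟩ := hstep q hne
          omega
        exact ⟨fun _ => q, Subsingleton.strictMono (α := Fin 1) _, rfl, hq⟩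
      | succ k ih =>
        obtain ⟨b, hqb, hb⟩ := hstep q (by rintro rfl; omega)
        obtain ⟨c, hc, hc0, hct⟩ := ih b (by omega)
        refine ⟨Fin.cons q c, ?_, rfl, ?_⟩
        · refine Fin.strictMono_iff_lt_succ.2 fun i => ?_
          refine Fin.cases ?_ (fun j => ?_) i
          · simpa [hc0] using hqb
          · simpa [← Fin.succ_castSucc] using hc j.castSucc_lt_succ
        · rw [← Fin.succ_last, Fin.cons_succ, hct]
    · rintro k ⟨c, hc, rfl, hct⟩
      have h := (hr.comp_strictMono hc).add_sub_le_of_fin (Fin.zero_le (Fin.last k))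
      simp only [Function.comp_apply, hct, ht] at h
      simpa using h
  exact hgreatest.csSup_eq

section TypeB

variable {Q : Type*} {m n n' p : ℕ}
  {z z' : Fin m → Q} {w : Fin (n + 1) → Q} {w' : Fin (n' + 1) → Q} {ι : Fin p → ℕ}

/-- `IsLevel z z' w w' c f` says that `f` is the rank function to the top of the poset on the
`z'_i` and `w'_k`, and that function raised by `c` on the `z_i` and `w_k`. -/
structure IsLevel (z z' : Fin m → Q) (w : Fin (n + 1) → Q) (w' : Fin (n' + 1) → Q)
    (c : ℕ) (f : Q → ℕ) : Prop where
  map_z : ∀ i, f (z i) = n' + (m - i) + c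
  map_z' : ∀ i, f (z' i) = n' + (m - i)
  map_w : ∀ k, f (w k) = n' + m + 1 + (n - k) + c
  map_w' : ∀ k, f (w' k) = n' - k

lemma exists_isLevel
    (hbij : Function.Bijective
      (Sum.elim (Sum.elim z z') (Sum.elim w w') :
        (Fin m ⊕ Fin m) ⊕ (Fin (n + 1) ⊕ Fin (n' + 1)) → Q)) (c : ℕ) :
    ∃ f, IsLevel z z' w w' c f := by
  let F : (Fin m ⊕ Fin m) ⊕ (Fin (n + 1) ⊕ Fin (n' + 1)) → ℕ :=
    Sum.elim (Sum.elim (fun i => n' + (m - i) + c) fun i => n' + (m - i))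
      (Sum.elim (fun k => n' + m + 1 + (n - k) + c) fun k => n' - k)
  have hF := fun x => congrArg F ((Equiv.ofBijective _ hbij).symm_apply_apply x)
  exact ⟨F ∘ (Equiv.ofBijective _ hbij).symm, fun i => hF (.inl (.inl i)),
    fun i => hF (.inl (.inr i)), fun k => hF (.inr (.inl k)), fun k => hF (.inr (.inr k))⟩

lemma exists_eq_of_surjective
    (hsurj : Function.Surjective
      (Sum.elim (Sum.elim z z') (Sum.elim w w') :
        (Fin m ⊕ Fin m) ⊕ (Fin (n + 1) ⊕ Fin (n' + 1)) → Q)) (q : Q) :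
    (∃ i, z i = q) ∨ (∃ i, z' i = q) ∨ (∃ k, w k = q) ∨ ∃ k, w' k = q := by
  obtain ⟨(i | i) | (k | k), h⟩ := hsurj q
  exacts [.inl ⟨i, h⟩, .inr (.inl ⟨i, h⟩), .inr (.inr (.inl ⟨k, h⟩)), .inr (.inr (.inr ⟨k, h⟩))]

lemma IsLevel.map_top {c : ℕ} {f : Q → ℕ} (hf : IsLevel z z' w w' c f) :
    f (w' (Fin.last n')) = 0 := by
  simp [hf.map_w']

lemma ranges_disjoint
    (hinj : Function.Injective
      (Sum.elim (Sum.elim z z') (Sum.elim w w') :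
        (Fin m ⊕ Fin m) ⊕ (Fin (n + 1) ⊕ Fin (n' + 1)) → Q)) :
    (∀ i j, z i ≠ z' j) ∧ (∀ i k, z i ≠ w' k) ∧ (∀ k l, w k ≠ w' l) ∧
      (∀ k i, w k ≠ z' i) ∧ ∀ k i, w k ≠ z i := by
  refine ⟨fun i j h => ?_, fun i k h => ?_, fun k l h => ?_, fun k i h => ?_, fun k i h => ?_⟩
  · simpa using @hinj (.inl (.inl i)) (.inl (.inr j)) h
  · simpa using @hinj (.inl (.inl i)) (.inr (.inr k)) h
  · simpa using @hinj (.inr (.inl k)) (.inr (.inr l)) h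
  · simpa using @hinj (.inr (.inl k)) (.inl (.inr i)) h
  · simpa using @hinj (.inr (.inl k)) (.inl (.inl i)) h

variable [PartialOrder Q]

/-- The order relations in a poset of type (b) which do not depend on the indices `i_j`. -/
structure TypeBChains (hm : 3 ≤ m) (z z' : Fin m → Q) (w : Fin (n + 1) → Q)
    (w' : Fin (n' + 1) → Q) : Prop where
  z_strictMono : StrictMono z
  z'_strictMono : StrictMono z'
  w_strictMono : StrictMono w
  w'_strictMono : StrictMono w'
  w_lt_z : w (Fin.last n) < z ⟨0, by omega⟩
  w_lt_z' : w (Fin.last n) < z' ⟨0, by omega⟩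
  z_lt_w' : z ⟨m - 1, by omega⟩ < w' 0
  z'_lt_w' : z' ⟨m - 1, by omega⟩ < w' 0
  z'_lt_z : z' ⟨0, by omega⟩ < z ⟨m - 1, by omega⟩

variable {hm : 3 ≤ m}

lemma typeBChains_of_covBy
    (hcov : ∀ a b : Q, a ⋖ b ↔ TypeBCovers m n n' p hm z z' w w' ι a b) :
    TypeBChains hm z z' w w' := by
  have hlt : ∀ {a b : Q}, TypeBCovers m n n' p hm z z' w w' ι a b → a < b :=
    fun h => ((hcov _ _).2 h).lt
  constructor
  · exact Fin.strictMono_of_lt_add_one fun i h =>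
      hlt (.inr <| .inr <| .inr <| .inr <| .inl ⟨i, h, rfl, rfl⟩)
  · exact Fin.strictMono_of_lt_add_one fun i h =>
      hlt (.inr <| .inr <| .inr <| .inr <| .inr <| .inl ⟨i, h, rfl, rfl⟩)
  · exact Fin.strictMono_iff_lt_succ.2 fun i => hlt (.inl ⟨i, rfl, rfl⟩)
  · exact Fin.strictMono_iff_lt_succ.2 fun i => hlt (.inr <| .inl ⟨i, rfl, rfl⟩)
  · exact hlt (.inr <| .inr <| .inl ⟨rfl, rfl⟩)
  · exact hlt (.inr <| .inr <| .inr <| .inl ⟨rfl, rfl⟩)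
  · exact hlt (.inr <| .inr <| .inr <| .inr <| .inr <| .inr <| .inl ⟨rfl, rfl⟩)
  · exact hlt (.inr <| .inr <| .inr <| .inr <| .inr <| .inr <| .inr <| .inl ⟨rfl, rfl⟩)
  · exact hlt (.inr <| .inr <| .inr <| .inr <| .inr <| .inr <| .inr <| .inr <| .inl ⟨rfl, rfl⟩)

namespace IsLevel

variable {c : ℕ} {f : Q → ℕ}

lemma strictAnti [LocallyFiniteOrder Q] (hf : IsLevel z z' w w' c f) (hc : c + 2 ≤ m)
    (hcov : ∀ a b : Q, a ⋖ b ↔ TypeBCovers m n n' p hm z z' w w' ι a b) : StrictAnti f := by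
  refine (strictAnti_iff_forall_covBy f).2 fun a b hab => ?_
  rcases (hcov a b).1 hab with ⟨i, rfl, rfl⟩ | ⟨i, rfl, rfl⟩ | ⟨rfl, rfl⟩ | ⟨rfl, rfl⟩ |
    ⟨i, hi, rfl, rfl⟩ | ⟨i, hi, rfl, rfl⟩ | ⟨rfl, rfl⟩ | ⟨rfl, rfl⟩ | ⟨rfl, rfl⟩ |
    ⟨j, a', b', ha', hb', rfl, rfl⟩ <;>
  simp only [hf.map_z, hf.map_z', hf.map_w, hf.map_w', Fin.val_castSucc, Fin.val_succ,
    Fin.val_last, Fin.val_zero] <;> omega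

lemma intervalRank_eq [LocallyFiniteOrder Q] (hf : IsLevel z z' w w' 0 f)
    (hcov : ∀ a b : Q, a ⋖ b ↔ TypeBCovers m n n' p hm z z' w w' ι a b)
    (hcases : ∀ q, (∃ i, z i = q) ∨ (∃ i, z' i = q) ∨ (∃ k, w k = q) ∨ ∃ k, w' k = q) (q : Q) :
    intervalRank q (w' (Fin.last n')) = f q := by
  have hch := typeBChains_of_covBy hcov
  refine intervalRank_eq_of_strictAnti (hf.strictAnti (by omega) hcov) hf.map_top
    (fun q hq => ?_) q
  rcases hcases q with ⟨⟨i, hi⟩, rfl⟩ | ⟨⟨i, hi⟩, rfl⟩ | ⟨k, rfl⟩ | ⟨k, rfl⟩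
  · by_cases h : i + 1 < m
    · exact ⟨z ⟨i + 1, h⟩, hch.z_strictMono (Nat.lt_succ_self i),
        by simp only [hf.map_z]; omega⟩
    · obtain rfl : i = m - 1 := by omega
      exact ⟨w' 0, hch.z_lt_w', by simp only [hf.map_z, hf.map_w', Fin.val_zero]; omega⟩
  · by_cases h : i + 1 < m
    · exact ⟨z' ⟨i + 1, h⟩, hch.z'_strictMono (Nat.lt_succ_self i),
        by simp only [hf.map_z']; omega⟩
    · obtain rfl : i = m - 1 := by omega
      exact ⟨w' 0, hch.z'_lt_w', by simp only [hf.map_z', hf.map_w', Fin.val_zero]; omega⟩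
  · induction k using Fin.lastCases with
    | last => exact ⟨_, hch.w_lt_z, by simp only [hf.map_z, hf.map_w, Fin.val_last]; omega⟩
    | cast k =>
      exact ⟨_, hch.w_strictMono k.castSucc_lt_succ,
        by simp only [hf.map_w, Fin.val_castSucc, Fin.val_succ]; omega⟩
  · induction k using Fin.lastCases with
    | last => exact absurd rfl hq
    | cast k =>
      exact ⟨_, hch.w'_strictMono k.castSucc_lt_succ,
        by simp only [hf.map_w', Fin.val_castSucc, Fin.val_succ]; omega⟩

lemma isMinTPAt [LocallyFiniteOrder Q] (hf : IsLevel z z' w w' c f) (hc : c + 2 ≤ m)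
    (hcov : ∀ a b : Q, a ⋖ b ↔ TypeBCovers m n n' p hm z z' w w' ι a b)
    (hcases : ∀ q, (∃ i, z i = q) ∨ (∃ i, z' i = q) ∨ (∃ k, w k = q) ∨ ∃ k, w' k = q) :
    IsMinTPAt (w' (Fin.last n')) f := by
  have hch := typeBChains_of_covBy hcov
  refine ⟨⟨hf.map_top, hf.strictAnti hc hcov⟩, fun μ ⟨hμt, hμ⟩ ⟨hle, hanti⟩ => ?_⟩
  have hμtop : ∀ k, μ (w' k) = f (w' k) := fun k => by
    have h₁ := (hμ.comp_strictMono hch.w'_strictMono).add_sub_le_of_fin (Fin.le_last k)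
    have h₂ := hle (w' k)
    simp only [Function.comp_apply, hμt, Fin.val_last, hf.map_w'] at h₁ h₂ ⊢
    omega
  have hμz' : ∀ i, μ (z' i) = f (z' i) := fun i => by
    have h₁ := (hμ.comp_strictMono hch.z'_strictMono).add_sub_le_of_fin
      (show i ≤ ⟨m - 1, by omega⟩ from Nat.le_sub_one_of_lt i.2)
    have h₂ := hle (z' i)
    have h₃ := hμ hch.z'_lt_w'
    simp only [Function.comp_apply, hμtop, Fin.val_zero, hf.map_w', hf.map_z'] at h₁ h₂ h₃ ⊢
    omega
  have hμzm : μ (z ⟨m - 1, by omega⟩) = f (z ⟨m - 1, by omega⟩) := by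
    have h₁ := hanti _ _ hch.z'_lt_z.le
    have h₂ := hle (z ⟨m - 1, by omega⟩)
    rw [hμz'] at h₁
    omega
  have hμz : ∀ i, μ (z i) = f (z i) := fun i => by
    have h₁ := (hμ.comp_strictMono hch.z_strictMono).add_sub_le_of_fin
      (show i ≤ ⟨m - 1, by omega⟩ from Nat.le_sub_one_of_lt i.2)
    have h₂ := hle (z i)
    simp only [Function.comp_apply, hμzm, hf.map_z] at h₁ h₂ ⊢
    omega
  have hμw : ∀ k, μ (w k) = f (w k) := fun k => by
    have h₁ := (hμ.comp_strictMono hch.w_strictMono).add_sub_le_of_fin (Fin.le_last k)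
    have h₂ := hle (w k)
    have h₃ := hμ hch.w_lt_z
    simp only [Function.comp_apply, hμz, hf.map_z, hf.map_w, Fin.val_last] at h₁ h₂ h₃ ⊢
    omega
  funext q
  rcases hcases q with ⟨i, rfl⟩ | ⟨i, rfl⟩ | ⟨k, rfl⟩ | ⟨k, rfl⟩
  exacts [hμz i, hμz' i, hμw k, hμtop k]

/-- The function of level `m - 1 - h` lies below `ν` for `h = min (m - 1) (ν z'_1 - ν z_m)`. -/
lemma leTP [LocallyFiniteOrder Q] {ν : Q → ℕ} (hνt : ν (w' (Fin.last n')) = 0) (hν : StrictAnti ν)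
    (hf : IsLevel z z' w w'
      (m - 1 - min (m - 1) (ν (z' ⟨0, by omega⟩) - ν (z ⟨m - 1, by omega⟩))) f)
    (hcov : ∀ a b : Q, a ⋖ b ↔ TypeBCovers m n n' p hm z z' w w' ι a b)
    (htop : ∀ q : Q, q ≤ w' (Fin.last n')) :
    LeTP f ν := by
  have hch := typeBChains_of_covBy hcov
  have hanti : Antitone fun q => (ν q : ℤ) - f q := by
    refine (antitone_iff_forall_covBy _).2 fun a b hab => ?_
    have hlt := hν hab.lt
    have hz'z := hν hch.z'_lt_z
    have hz'm := hν hch.z'_lt_w'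
    have hwz := hν hch.w_lt_z
    have hz'chain := fun i => (hν.comp_strictMono hch.z'_strictMono).add_sub_le_of_fin
      (show ⟨0, by omega⟩ ≤ i from Nat.zero_le _)
    have hzchain := fun i => (hν.comp_strictMono hch.z_strictMono).add_sub_le_of_fin
      (show i ≤ ⟨m - 1, by omega⟩ from Nat.le_sub_one_of_lt i.2)
    simp only [Function.comp_apply] at hz'chain hzchain
    have hzfirst := hzchain ⟨0, by omega⟩
    have hz'last := hz'chain ⟨m - 1, by omega⟩
    rcases (hcov a b).1 hab with ⟨i, rfl, rfl⟩ | ⟨i, rfl, rfl⟩ | ⟨rfl, rfl⟩ | ⟨rfl, rfl⟩ |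
      ⟨i, hi, rfl, rfl⟩ | ⟨i, hi, rfl, rfl⟩ | ⟨rfl, rfl⟩ | ⟨rfl, rfl⟩ | ⟨rfl, rfl⟩ |
      ⟨j, a', b', ha', hb', rfl, rfl⟩
    case inr.inr.inr.inr.inr.inr.inr.inr.inr =>
      have ha := hzchain a'
      have hb := hz'chain b'
      simp only [hf.map_z, hf.map_z'] at ha hb ⊢
      omega
    all_goals
      simp only [hf.map_z, hf.map_z', hf.map_w, hf.map_w', Fin.val_castSucc, Fin.val_succ,
        Fin.val_last, Fin.val_zero] at hzfirst hz'last ⊢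
      omega
  refine ⟨fun a => ?_, fun a b hab => hanti hab⟩
  have h := hanti (htop a)
  simp only [hνt, hf.map_top] at h
  omega

end IsLevel

/-- The filter generated by `z'_1` consists of the `z'_i`, the `w'_k` and `z_m`. -/
lemma z'_zero_le_iff [LocallyFiniteOrder Q]
    (hbij : Function.Bijective
      (Sum.elim (Sum.elim z z') (Sum.elim w w') :
        (Fin m ⊕ Fin m) ⊕ (Fin (n + 1) ⊕ Fin (n' + 1)) → Q))
    (hcov : ∀ a b : Q, a ⋖ b ↔ TypeBCovers m n n' p hm z z' w w' ι a b) (q : Q) :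
    z' ⟨0, by omega⟩ ≤ q ↔
      (∃ i, z' i = q) ∨ (∃ k, w' k = q) ∨ q = z ⟨m - 1, by omega⟩ := by
  have hch := typeBChains_of_covBy hcov
  constructor
  · have hmono : Monotone fun q => (∃ i, z' i = q) ∨ (∃ k, w' k = q) ∨ q = z ⟨m - 1, by omega⟩ := by
      refine (monotone_iff_forall_covBy _).2 fun a b hab => ?_
      obtain ⟨hzz', hzw', hww', hwz', hwz⟩ := ranges_disjoint hbij.injective
      have hz : ∀ i j, z i = z j → i = j := fun i j h => hch.z_strictMono.injective h
      rcases (hcov a b).1 hab with ⟨i, rfl, rfl⟩ | ⟨i, rfl, rfl⟩ | ⟨rfl, rfl⟩ | ⟨rfl, rfl⟩ |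
        ⟨i, hi, rfl, rfl⟩ | ⟨i, hi, rfl, rfl⟩ | ⟨rfl, rfl⟩ | ⟨rfl, rfl⟩ | ⟨rfl, rfl⟩ |
        ⟨j, a', b', ha', hb', rfl, rfl⟩ <;>
      rintro (⟨i, h⟩ | ⟨k, h⟩ | h) <;> grind
    exact fun h => hmono h (.inl ⟨_, rfl⟩)
  · have hz' : ∀ i, z' ⟨0, by omega⟩ ≤ z' i := fun i => hch.z'_strictMono.monotone (Nat.zero_le _)
    rintro (⟨i, rfl⟩ | ⟨k, rfl⟩ | rfl)
    · exact hz' i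
    · exact (hz' _).trans (hch.z'_lt_w'.le.trans (hch.w'_strictMono.monotone (Fin.zero_le k)))
    · exact hch.z'_lt_z.le

lemma isLevel_nuH [LocallyFiniteOrder Q] [DecidableEq Q]
    [DecidableRel ((· ≤ ·) : Q → Q → Prop)]
    (hbij : Function.Bijective
      (Sum.elim (Sum.elim z z') (Sum.elim w w') :
        (Fin m ⊕ Fin m) ⊕ (Fin (n + 1) ⊕ Fin (n' + 1)) → Q))
    (hcov : ∀ a b : Q, a ⋖ b ↔ TypeBCovers m n n' p hm z z' w w' ι a b) (h : ℕ) :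
    IsLevel z z' w w' (m - 1 - h) (nuH m n' h hm z z' w') := by
  obtain ⟨f, hf⟩ := exists_isLevel hbij 0
  have hrank := hf.intervalRank_eq hcov (exists_eq_of_surjective hbij.surjective)
  obtain ⟨hzz', hzw', hww', hwz', hwz⟩ := ranges_disjoint hbij.injective
  constructor <;> intro i <;>
    simp only [nuH, hrank, hf.map_z, hf.map_z', hf.map_w, hf.map_w',
      z'_zero_le_iff hbij hcov] <;> grind

end TypeB

/-- for a poset of type (b), the functions `ν_h` (`1 ≤ h ≤ m−1`) are
pairwise distinct and are exactly the minimal elements of `(T(P), ≤)`; in particular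
there are exactly `m − 1` minimal elements. -/
theorem typeB_minimal_elements
    {Q : Type*} [Fintype Q] [PartialOrder Q] [DecidableEq Q]
    [DecidableRel ((· ≤ ·) : Q → Q → Prop)]
    (m n n' p : ℕ) (hm : 3 ≤ m)
    (z z' : Fin m → Q) (w : Fin (n + 1) → Q) (w' : Fin (n' + 1) → Q)
    (ι : Fin p → ℕ)
    (hι₁ : ∀ j, 1 ≤ ι j) (hι₂ : ∀ j, ι j ≤ m - 1) (hιmono : StrictMono ι)
    (hbij : Function.Bijective
      (Sum.elim (Sum.elim z z') (Sum.elim w w') :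
        (Fin m ⊕ Fin m) ⊕ (Fin (n + 1) ⊕ Fin (n' + 1)) → Q))
    (hcov : ∀ a b : Q, a ⋖ b ↔ TypeBCovers m n n' p hm z z' w w' ι a b)
    (hbot : ∀ q : Q, w 0 ≤ q)
    (htop : ∀ q : Q, q ≤ w' (Fin.last n')) :
    (∀ h : ℕ, 1 ≤ h → h ≤ m - 1 →
      IsMinTPAt (w' (Fin.last n')) (nuH m n' h hm z z' w')) ∧
    (∀ h h' : ℕ, 1 ≤ h → h ≤ m - 1 → 1 ≤ h' → h' ≤ m - 1 →
      nuH m n' h hm z z' w' = nuH m n' h' hm z z' w' → h = h') ∧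
    (∀ ν : Q → ℕ, IsMinTPAt (w' (Fin.last n')) ν →
      ∃ h : ℕ, 1 ≤ h ∧ h ≤ m - 1 ∧ ν = nuH m n' h hm z z' w') ∧
    {ν : Q → ℕ | IsMinTPAt (w' (Fin.last n')) ν}.ncard = m - 1 := by
  let _ : DecidableLT Q := decidableLTOfDecidableLE
  let _ : LocallyFiniteOrder Q := Fintype.toLocallyFiniteOrder
  have hcases := exists_eq_of_surjective hbij.surjective
  have hlevel := isLevel_nuH hbij hcov
  have hmin : ∀ h : ℕ, 1 ≤ h → h ≤ m - 1 →
      IsMinTPAt (w' (Fin.last n')) (nuH m n' h hm z z' w') := fun h h₁ _ =>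
    (hlevel h).isMinTPAt (by omega) hcov hcases
  have hinj : ∀ h h' : ℕ, 1 ≤ h → h ≤ m - 1 → 1 ≤ h' → h' ≤ m - 1 →
      nuH m n' h hm z z' w' = nuH m n' h' hm z z' w' → h = h' := fun h h' _ _ _ _ heq => by
    have := congrFun heq (z ⟨0, by omega⟩)
    rw [(hlevel h).map_z, (hlevel h').map_z] at this
    omega
  have hall : ∀ ν : Q → ℕ, IsMinTPAt (w' (Fin.last n')) ν →
      ∃ h : ℕ, 1 ≤ h ∧ h ≤ m - 1 ∧ ν = nuH m n' h hm z z' w' := by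
    rintro ν ⟨⟨hνt, hν⟩, hνmin⟩
    have hlt := hν (typeBChains_of_covBy hcov).z'_lt_z
    have h₁ : 1 ≤ min (m - 1) (ν (z' ⟨0, by omega⟩) - ν (z ⟨m - 1, by omega⟩)) := by omega
    have h₂ := min_le_left (m - 1) (ν (z' ⟨0, by omega⟩) - ν (z ⟨m - 1, by omega⟩))
    exact ⟨_, h₁, h₂, (hνmin _ (hmin _ h₁ h₂).1
      (IsLevel.leTP hνt hν (hlevel _) hcov htop)).symm⟩
  refine ⟨hmin, hinj, hall, ?_⟩
  have himage : {ν : Q → ℕ | IsMinTPAt (w' (Fin.last n')) ν} =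
      Set.image (fun h => nuH m n' h hm z z' w') (Finset.Icc 1 (m - 1) : Finset ℕ) := by
    ext ν
    simp only [Set.mem_ofPred_eq, Set.mem_image, Finset.coe_Icc, Set.mem_Icc]
    constructor
    · intro hν
      obtain ⟨h, h₁, h₂, rfl⟩ := hall ν hν
      exact ⟨h, ⟨h₁, h₂⟩, rfl⟩
    · rintro ⟨h, ⟨h₁, h₂⟩, rfl⟩
      exact hmin h h₁ h₂
  rw [himage, Set.InjOn.ncard_image, Set.ncard_coe_finset, Nat.card_Icc, Nat.add_sub_cancel]
  intro h hh h' hh' heq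
  simp only [Finset.coe_Icc, Set.mem_Icc] at hh hh'
  exact hinj h h' hh.1 hh.2 hh'.1 hh'.2 heq
end

section
/- Let P⁺ be a poset of type (a) with parameters m ≥ 3 and n, n′ ≥ 0, and set P = P⁺ ∖ {∞}. For 1 ≤ h ≤ m−1 define ν_h : P⁺ → ℕ by ν_h(x) = rank[x,∞] if x ∈ [z′₁,∞] ∖ {z_m} and ν_h(x) = rank[x,∞] + m − 1 − h otherwise; for 1 ≤ h ≤ m−2 define ν′_h : P⁺ → ℕ by ν′_h(x) = rank[x,∞] if x ∈ [z₁,∞] ∖ {z′_m} and ν′_h(x) = rank[x,∞] + m − 1 − h otherwise. Then the minimal elements of the poset (T(P), ≤) are exactly ν₁, …, ν_{m−1}, ν′₁, …, ν′_{m−2}, which are pairwise distinct; thus (T(P), ≤) has exactly 2m − 3 minimal elements. -/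
/-- The covering relations of a poset of type (a) with parameters `m ≥ 3`, `n, n' ≥ 0`. -/
def TypeACovers {Q : Type*} (m n n' : ℕ) (hm : 3 ≤ m)
    (z z' : Fin m → Q) (w : Fin (n + 1) → Q) (w' : Fin (n' + 1) → Q)
    (a b : Q) : Prop :=
  (∃ i : Fin n, a = w i.castSucc ∧ b = w i.succ) ∨
  (∃ i : Fin n', a = w' i.castSucc ∧ b = w' i.succ) ∨
  (a = w (Fin.last n) ∧ b = z ⟨0, by omega⟩) ∨
  (a = w (Fin.last n) ∧ b = z' ⟨0, by omega⟩) ∨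
  (∃ (i : ℕ) (h : i + 1 < m), a = z ⟨i, by omega⟩ ∧ b = z ⟨i + 1, h⟩) ∨
  (∃ (i : ℕ) (h : i + 1 < m), a = z' ⟨i, by omega⟩ ∧ b = z' ⟨i + 1, h⟩) ∨
  (a = z ⟨m - 1, by omega⟩ ∧ b = w' 0) ∨
  (a = z' ⟨m - 1, by omega⟩ ∧ b = w' 0) ∨
  (a = z' ⟨0, by omega⟩ ∧ b = z ⟨m - 1, by omega⟩) ∨
  (a = z ⟨0, by omega⟩ ∧ b = z' ⟨m - 1, by omega⟩)

theorem Fin.add_sub_le_of_strictAnti {k : ℕ} {f : Fin k → ℕ} (hf : StrictAnti f) {i j : Fin k}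
    (hij : i ≤ j) : f j + ((j : ℕ) - i) ≤ f i := by
  obtain ⟨i, hi⟩ := i
  obtain ⟨j, hj⟩ := j
  induction j, (show i ≤ j from hij) using Nat.le_induction with
  | base => simp
  | succ j hle ih =>
    have hlt : f ⟨j + 1, hj⟩ < f ⟨j, by omega⟩ := hf (by simp [Fin.lt_def])
    have := ih (by omega) hle
    simp only at this ⊢
    omega

theorem Fin.strictMono_of_covBy {Q : Type*} [PartialOrder Q] {k : ℕ} {c : Fin k → Q}
    (hc : ∀ (i : ℕ) (h : i + 1 < k), c ⟨i, by omega⟩ ⋖ c ⟨i + 1, h⟩) : StrictMono c := by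
  cases k with
  | zero => exact fun i => i.elim0
  | succ k =>
    rw [Fin.strictMono_iff_lt_succ]
    exact fun i => (hc i (by omega)).lt

section Rank

variable {Q : Type*} [PartialOrder Q]

theorem StrictAnti.length_le_of_chain {f : Q → ℕ} (hf : StrictAnti f) {k : ℕ}
    {c : Fin (k + 1) → Q} (hc : StrictMono c) : k ≤ f (c 0) := by
  have := Fin.add_sub_le_of_strictAnti (hf.comp_strictMono hc) (Fin.zero_le (Fin.last k))
  simp only [Function.comp_apply, Fin.val_last, Fin.val_zero] at this
  omega

/-- A strictly decreasing function that vanishes only at the maximum and can always be lowered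
by exactly one computes the rank of the upper intervals. -/
theorem intervalRank_eq_of_step {top : Q} {f : Q → ℕ} (hf : StrictAnti f) (hf0 : f top = 0)
    (hstep : ∀ x, x ≠ top → ∃ y, x < y ∧ f x = f y + 1) (x : Q) :
    intervalRank x top = f x := by
  have hmem : ∀ k x, f x = k →
      ∃ c : Fin (k + 1) → Q, StrictMono c ∧ c 0 = x ∧ c (Fin.last k) = top := by
    intro k
    induction k with
    | zero =>
      intro x hx
      have hxt : x = top := by
        by_contra hne
        obtain ⟨y, -, hy⟩ := hstep x hne
        omega
      exact ⟨fun _ => x, fun i j hij => absurd hij (by omega), rfl, hxt⟩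
    | succ k ih =>
      intro x hx
      have hne : x ≠ top := by rintro rfl; omega
      obtain ⟨y, hxy, hy⟩ := hstep x hne
      obtain ⟨c, hc, hc0, hcl⟩ := ih y (by omega)
      refine ⟨Fin.cons x c, ?_, rfl, ?_⟩
      · rw [Fin.strictMono_iff_lt_succ]
        intro i
        cases i using Fin.cases with
        | zero => simpa [hc0] using hxy
        | succ i =>
          rw [← Fin.succ_castSucc, Fin.cons_succ, Fin.cons_succ]
          exact hc i.castSucc_lt_succ
      · rw [← Fin.succ_last, Fin.cons_succ, hcl]
  refine IsGreatest.csSup_eq ⟨hmem _ x rfl, ?_⟩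
  rintro k ⟨c, hc, rfl, -⟩
  exact hf.length_le_of_chain hc

theorem LeTP.of_covBy [Finite Q] {top : Q} (htop : ∀ q, q ≤ top) {μ ν : Q → ℕ}
    (hμ : μ top = 0) (hν : ν top = 0) (h : ∀ a b, a ⋖ b → ν b + μ a ≤ ν a + μ b) :
    LeTP μ ν := by
  classical
  have := Fintype.ofFinite Q
  let _ : LocallyFiniteOrder Q := Fintype.toLocallyFiniteOrder
  have hanti : Antitone fun q => (ν q : ℤ) - μ q := by
    rw [antitone_iff_forall_covBy]
    intro a b hab
    have := h a b hab
    omega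
  refine ⟨fun a => ?_, fun a b hab => hanti hab⟩
  have := hanti (htop a)
  simp only [hμ, hν] at this
  omega

theorem strictAnti_of_forall_covBy [Finite Q] {ν : Q → ℕ} (h : ∀ a b, a ⋖ b → ν b < ν a) :
    StrictAnti ν := by
  classical
  have := Fintype.ofFinite Q
  let _ : LocallyFiniteOrder Q := Fintype.toLocallyFiniteOrder
  exact (strictAnti_iff_forall_covBy ν).2 h

theorem monotone_of_forall_covBy [Finite Q] {ν : Q → ℕ} (h : ∀ a b, a ⋖ b → ν a ≤ ν b) :
    Monotone ν := by
  classical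
  have := Fintype.ofFinite Q
  let _ : LocallyFiniteOrder Q := Fintype.toLocallyFiniteOrder
  exact (monotone_iff_forall_covBy ν).2 h

end Rank

/-- The poset `Q` is of type (a), with the given labelling of its elements. -/
structure IsTypeA {Q : Type*} [PartialOrder Q] (m n n' : ℕ) (hm : 3 ≤ m)
    (z z' : Fin m → Q) (w : Fin (n + 1) → Q) (w' : Fin (n' + 1) → Q) : Prop where
  bij : Function.Bijective (Sum.elim (Sum.elim z z') (Sum.elim w w') :
    (Fin m ⊕ Fin m) ⊕ (Fin (n + 1) ⊕ Fin (n' + 1)) → Q)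
  cov : ∀ a b : Q, a ⋖ b ↔ TypeACovers m n n' hm z z' w w' a b
  top : ∀ q : Q, q ≤ w' (Fin.last n')

namespace IsTypeA

variable {Q : Type*} [PartialOrder Q] {m n n' : ℕ} {hm : 3 ≤ m}
  {z z' : Fin m → Q} {w : Fin (n + 1) → Q} {w' : Fin (n' + 1) → Q}

theorem symm (H : IsTypeA m n n' hm z z' w w') : IsTypeA m n n' hm z' z w w' where
  bij := by
    convert H.bij.comp ((Equiv.sumComm (Fin m) (Fin m)).sumCongr
      (Equiv.refl (Fin (n + 1) ⊕ Fin (n' + 1)))).bijective using 1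
    ext ((i | i) | (i | i)) <;> rfl
  cov a b := by
    rw [H.cov]
    exact or_congr_right <| or_congr_right <| or_left_comm.trans <|
      or_congr_right <| or_congr_right <| or_left_comm.trans <|
      or_congr_right <| or_congr_right <| or_left_comm.trans <|
      or_congr_right <| or_congr_right or_comm
  top := H.top

theorem forall_iff (H : IsTypeA m n n' hm z z' w w') {p : Q → Prop} :
    (∀ q, p q) ↔ (∀ i, p (z i)) ∧ (∀ i, p (z' i)) ∧ (∀ i, p (w i)) ∧ ∀ i, p (w' i) := by
  rw [H.bij.surjective.forall]
  simp [and_assoc]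

/-- Functions on `Q` can be prescribed freely on the labels. -/
theorem exists_fun (H : IsTypeA m n n' hm z z' w w') (a a' : Fin m → ℕ) (b : Fin (n + 1) → ℕ)
    (b' : Fin (n' + 1) → ℕ) : ∃ f : Q → ℕ,
      (∀ i, f (z i) = a i) ∧ (∀ i, f (z' i) = a' i) ∧ (∀ i, f (w i) = b i) ∧
        ∀ i, f (w' i) = b' i := by
  let e := Equiv.ofBijective _ H.bij
  let g : (Fin m ⊕ Fin m) ⊕ (Fin (n + 1) ⊕ Fin (n' + 1)) → ℕ :=
    Sum.elim (Sum.elim a a') (Sum.elim b b')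
  have hg : ∀ s, g (e.symm (e s)) = g s := fun s => by rw [e.symm_apply_apply]
  exact ⟨fun q => g (e.symm q), fun i => hg (.inl (.inl i)), fun i => hg (.inl (.inr i)),
    fun i => hg (.inr (.inl i)), fun i => hg (.inr (.inr i))⟩

theorem forall_covBy_iff (H : IsTypeA m n n' hm z z' w w') {p : Q → Q → Prop} :
    (∀ a b, a ⋖ b → p a b) ↔
      (∀ i : Fin n, p (w i.castSucc) (w i.succ)) ∧
      (∀ i : Fin n', p (w' i.castSucc) (w' i.succ)) ∧
      p (w (Fin.last n)) (z ⟨0, by omega⟩) ∧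
      p (w (Fin.last n)) (z' ⟨0, by omega⟩) ∧
      (∀ (i : ℕ) (h : i + 1 < m), p (z ⟨i, by omega⟩) (z ⟨i + 1, h⟩)) ∧
      (∀ (i : ℕ) (h : i + 1 < m), p (z' ⟨i, by omega⟩) (z' ⟨i + 1, h⟩)) ∧
      p (z ⟨m - 1, by omega⟩) (w' 0) ∧
      p (z' ⟨m - 1, by omega⟩) (w' 0) ∧
      p (z' ⟨0, by omega⟩) (z ⟨m - 1, by omega⟩) ∧
      p (z ⟨0, by omega⟩) (z' ⟨m - 1, by omega⟩) := by
  simp only [H.cov, TypeACovers]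
  constructor
  · intro h
    exact ⟨fun i => h _ _ (.inl ⟨i, rfl, rfl⟩),
      fun i => h _ _ (.inr (.inl ⟨i, rfl, rfl⟩)),
      h _ _ (.inr (.inr (.inl ⟨rfl, rfl⟩))),
      h _ _ (.inr (.inr (.inr (.inl ⟨rfl, rfl⟩)))),
      fun i hi => h _ _ (.inr (.inr (.inr (.inr (.inl ⟨i, hi, rfl, rfl⟩))))),
      fun i hi => h _ _ (.inr (.inr (.inr (.inr (.inr (.inl ⟨i, hi, rfl, rfl⟩)))))),
      h _ _ (.inr (.inr (.inr (.inr (.inr (.inr (.inl ⟨rfl, rfl⟩))))))),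
      h _ _ (.inr (.inr (.inr (.inr (.inr (.inr (.inr (.inl ⟨rfl, rfl⟩)))))))),
      h _ _ (.inr (.inr (.inr (.inr (.inr (.inr (.inr (.inr (.inl ⟨rfl, rfl⟩))))))))),
      h _ _ (.inr (.inr (.inr (.inr (.inr (.inr (.inr (.inr (.inr ⟨rfl, rfl⟩)))))))))⟩
  · rintro ⟨h1, h2, h3, h4, h5, h6, h7, h8, h9, h10⟩ a b
      (⟨i, rfl, rfl⟩ | ⟨i, rfl, rfl⟩ | ⟨rfl, rfl⟩ | ⟨rfl, rfl⟩ | ⟨i, h, rfl, rfl⟩ |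
        ⟨i, h, rfl, rfl⟩ | ⟨rfl, rfl⟩ | ⟨rfl, rfl⟩ | ⟨rfl, rfl⟩ | ⟨rfl, rfl⟩)
    exacts [h1 i, h2 i, h3, h4, h5 i h, h6 i h, h7, h8, h9, h10]

theorem strictMono_z (H : IsTypeA m n n' hm z z' w w') : StrictMono z :=
  Fin.strictMono_of_covBy (H.forall_covBy_iff.1 fun _ _ h => h).2.2.2.2.1

theorem strictMono_w (H : IsTypeA m n n' hm z z' w w') : StrictMono w :=
  Fin.strictMono_iff_lt_succ.2 fun i => ((H.forall_covBy_iff.1 fun _ _ h => h).1 i).lt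

theorem strictMono_w' (H : IsTypeA m n n' hm z z' w w') : StrictMono w' :=
  Fin.strictMono_iff_lt_succ.2 fun i => ((H.forall_covBy_iff.1 fun _ _ h => h).2.1 i).lt

theorem ne_z (H : IsTypeA m n n' hm z z' w w') (j : Fin m) :
    (∀ i, z' i ≠ z j) ∧ (∀ i, w' i ≠ z j) := by
  refine ⟨fun i hi => ?_, fun i hi => ?_⟩
  · simpa using H.bij.injective (a₁ := .inl (.inr i)) (a₂ := .inl (.inl j)) hi
  · simpa using H.bij.injective (a₁ := .inr (.inr i)) (a₂ := .inl (.inl j)) hi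

variable [Finite Q]

theorem rank_eq (H : IsTypeA m n n' hm z z' w w') :
    (∀ i, intervalRank (z i) (w' (Fin.last n')) = n' + m - i) ∧
    (∀ i, intervalRank (z' i) (w' (Fin.last n')) = n' + m - i) ∧
    (∀ i, intervalRank (w i) (w' (Fin.last n')) = n' + 1 + m + (n - i)) ∧
    (∀ i, intervalRank (w' i) (w' (Fin.last n')) = n' - i) := by
  obtain ⟨f, hz, hz', hw, hw'⟩ := H.exists_fun (fun i => n' + m - i) (fun i => n' + m - i)
    (fun i => n' + 1 + m + (n - i)) (fun i => n' - i)
  have hf : StrictAnti f := by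
    refine strictAnti_of_forall_covBy (H.forall_covBy_iff.2 ?_)
    simp only [hz, hz', hw, hw', Fin.val_castSucc, Fin.val_succ, Fin.val_last, Fin.val_zero]
    refine ⟨fun i => ?_, fun i => ?_, ?_, ?_, fun i _ => ?_, fun i _ => ?_, ?_, ?_, ?_, ?_⟩ <;>
      omega
  obtain ⟨c1, c2, c3, -, c5, c6, c7, c8, -⟩ :=
    H.forall_covBy_iff (p := fun a b => a < b) |>.1 fun _ _ h => h.lt
  have hstep : ∀ x, x ≠ w' (Fin.last n') → ∃ y, x < y ∧ f x = f y + 1 := by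
    rw [H.forall_iff]
    refine ⟨fun i _ => ?_, fun i _ => ?_, fun i _ => ?_, fun i hi => ?_⟩
    · by_cases h : (i : ℕ) + 1 < m
      · refine ⟨_, c5 i h, ?_⟩
        simp only [hz]
        omega
      · have hi : i = ⟨m - 1, by omega⟩ := Fin.ext (by simp only; omega)
        rw [hi]
        refine ⟨_, c7, ?_⟩
        simp only [hz, hw', Fin.val_zero]
        omega
    · by_cases h : (i : ℕ) + 1 < m
      · refine ⟨_, c6 i h, ?_⟩
        simp only [hz']
        omega
      · have hi : i = ⟨m - 1, by omega⟩ := Fin.ext (by simp only; omega)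
        rw [hi]
        refine ⟨_, c8, ?_⟩
        simp only [hz', hw', Fin.val_zero]
        omega
    · cases i using Fin.lastCases with
      | last =>
        refine ⟨_, c3, ?_⟩
        simp only [hz, hw, Fin.val_last]
        omega
      | cast i =>
        refine ⟨_, c1 i, ?_⟩
        simp only [hw, Fin.val_castSucc, Fin.val_succ]
        omega
    · cases i using Fin.lastCases with
      | last => exact absurd rfl hi
      | cast i =>
        refine ⟨_, c2 i, ?_⟩
        simp only [hw', Fin.val_castSucc, Fin.val_succ]
        omega
  have hrank := intervalRank_eq_of_step hf (by simp [hw']) hstep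
  exact ⟨fun i => (hrank _).trans (hz i), fun i => (hrank _).trans (hz' i),
    fun i => (hrank _).trans (hw i), fun i => (hrank _).trans (hw' i)⟩

theorem z'_zero_le (H : IsTypeA m n n' hm z z' w w') :
    (∀ i : Fin m, z' ⟨0, by omega⟩ ≤ z i → (i : ℕ) = m - 1) ∧
    (∀ i, z' ⟨0, by omega⟩ ≤ z' i) ∧
    (∀ i, ¬ z' ⟨0, by omega⟩ ≤ w i) ∧
    (∀ i, z' ⟨0, by omega⟩ ≤ w' i) := by
  obtain ⟨f, hz, hz', hw, hw'⟩ := H.exists_fun (fun i => if (i : ℕ) = m - 1 then 1 else 0)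
    (fun _ => 1) (fun _ => 0) (fun _ => 1)
  have hf : Monotone f := by
    refine monotone_of_forall_covBy (H.forall_covBy_iff.2 ?_)
    simp only [hz, hz', hw, hw']
    refine ⟨fun i => ?_, fun i => ?_, ?_, ?_, fun i _ => ?_, fun i _ => ?_, ?_, ?_, ?_, ?_⟩ <;>
      grind
  have hz'_le : ∀ i, z' ⟨0, by omega⟩ ≤ z' i := fun i =>
    H.symm.strictMono_z.monotone (Nat.zero_le _)
  refine ⟨fun i hi => ?_, hz'_le, fun i hi => ?_, fun i => ?_⟩
  · have := hf hi
    rw [hz, hz'] at this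
    by_contra hne
    simp [hne] at this
  · have := hf hi
    rw [hw, hz'] at this
    omega
  · have hlast : z' ⟨m - 1, by omega⟩ < w' 0 :=
      (H.forall_covBy_iff.1 fun _ _ h => h.lt).2.2.2.2.2.2.2.1
    exact (hz'_le _).trans (hlast.le.trans (H.strictMono_w'.monotone (Fin.zero_le i)))

section Nu

variable [DecidableEq Q] [DecidableRel ((· ≤ ·) : Q → Q → Prop)]

theorem nuH_eq (H : IsTypeA m n n' hm z z' w w') (h : ℕ) :
    (∀ i, nuH m n' h hm z z' w' (z i) = n' + m - i + (m - 1 - h)) ∧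
    (∀ i, nuH m n' h hm z z' w' (z' i) = n' + m - i) ∧
    (∀ i, nuH m n' h hm z z' w' (w i) = n' + 1 + m + (n - i) + (m - 1 - h)) ∧
    (∀ i, nuH m n' h hm z z' w' (w' i) = n' - i) := by
  obtain ⟨rz, rz', rw_, rw'⟩ := H.rank_eq
  obtain ⟨lz, lz', lw, lw'⟩ := H.z'_zero_le
  obtain ⟨nz', nw'⟩ := H.ne_z ⟨m - 1, by omega⟩
  refine ⟨fun i => ?_, fun i => ?_, fun i => ?_, fun i => ?_⟩ <;> unfold nuH
  · rw [if_neg, rz]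
    exact fun hi => hi.2 (congrArg z (Fin.ext (lz i hi.1)))
  · rw [if_pos ⟨lz' i, nz' i⟩, rz']
  · rw [if_neg fun hi => lw i hi.1, rw_]
  · rw [if_pos ⟨lw' i, nw' i⟩, rw']

theorem isTPAt_nuH (H : IsTypeA m n n' hm z z' w w') {h : ℕ} (h1 : 1 ≤ h) :
    IsTPAt (w' (Fin.last n')) (nuH m n' h hm z z' w') := by
  obtain ⟨hz, hz', hw, hw'⟩ := H.nuH_eq h
  refine ⟨by simp [hw'], strictAnti_of_forall_covBy (H.forall_covBy_iff.2 ?_)⟩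
  simp only [hz, hz', hw, hw', Fin.val_castSucc, Fin.val_succ, Fin.val_last, Fin.val_zero]
  refine ⟨fun i => ?_, fun i => ?_, ?_, ?_, fun i _ => ?_, fun i _ => ?_, ?_, ?_, ?_, ?_⟩ <;>
    omega

theorem isMinTPAt_nuH (H : IsTypeA m n n' hm z z' w w') {h : ℕ} (h1 : 1 ≤ h) :
    IsMinTPAt (w' (Fin.last n')) (nuH m n' h hm z z' w') := by
  refine ⟨H.isTPAt_nuH h1, fun μ hμ hle => ?_⟩
  obtain ⟨hz, hz', hw, hw'⟩ := H.nuH_eq h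
  obtain ⟨-, -, c3, -, -, -, -, c8, -⟩ :=
    H.forall_covBy_iff (p := fun a b => μ b < μ a) |>.1 fun _ _ h => hμ.2 h.lt
  have μw' : ∀ i : Fin (n' + 1), n' - (i : ℕ) ≤ μ (w' i) := fun i => by
    have := Fin.add_sub_le_of_strictAnti (hμ.2.comp_strictMono H.strictMono_w') (Fin.le_last i)
    simp only [Function.comp_apply, Fin.val_last] at this
    omega
  have hlast : ∀ i : Fin m, i ≤ ⟨m - 1, by omega⟩ := fun i => Fin.le_def.2 (by simp only; omega)
  have μz' : ∀ i : Fin m, n' + m - (i : ℕ) ≤ μ (z' i) := fun i => by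
    have := Fin.add_sub_le_of_strictAnti (hμ.2.comp_strictMono H.symm.strictMono_z) (hlast i)
    have h0 := μw' 0
    simp only [Function.comp_apply, Fin.val_zero] at this h0
    omega
  have ez' : ∀ i, μ (z' i) = n' + m - i := fun i =>
    le_antisymm ((hle.1 _).trans_eq (hz' i)) (μz' i)
  have μzlast : n' + 1 + (m - 1 - h) ≤ μ (z ⟨m - 1, by omega⟩) := by
    have := hle.2 (z' ⟨0, by omega⟩) (z ⟨m - 1, by omega⟩)
      ((H.forall_covBy_iff.1 fun _ _ h => h.le).2.2.2.2.2.2.2.2.1)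
    simp only [hz, hz', ez'] at this
    omega
  have μz : ∀ i : Fin m, n' + m - (i : ℕ) + (m - 1 - h) ≤ μ (z i) := fun i => by
    have := Fin.add_sub_le_of_strictAnti (hμ.2.comp_strictMono H.strictMono_z) (hlast i)
    simp only [Function.comp_apply] at this
    omega
  have μw : ∀ i : Fin (n + 1), n' + 1 + m + (n - (i : ℕ)) + (m - 1 - h) ≤ μ (w i) := fun i => by
    have := Fin.add_sub_le_of_strictAnti (hμ.2.comp_strictMono H.strictMono_w) (Fin.le_last i)
    have h0 := μz ⟨0, by omega⟩
    simp only [Function.comp_apply, Fin.val_last] at this h0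
    omega
  refine funext (H.forall_iff.2 ⟨fun i => ?_, fun i => ?_, fun i => ?_, fun i => ?_⟩) <;>
    refine le_antisymm (hle.1 _) ?_
  · exact (hz i).trans_le (μz i)
  · exact (hz' i).trans_le (μz' i)
  · exact (hw i).trans_le (μw i)
  · exact (hw' i).trans_le (μw' i)

theorem eq_of_nuH_eq (H : IsTypeA m n n' hm z z' w w') {h h' : ℕ} (h2 : h ≤ m - 1)
    (h2' : h' ≤ m - 1) (heq : nuH m n' h hm z z' w' = nuH m n' h' hm z z' w') : h = h' := by
  have := congrFun heq (z ⟨0, by omega⟩)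
  rw [(H.nuH_eq h).1, (H.nuH_eq h').1] at this
  omega

theorem nuH_ne_nuH_swap (H : IsTypeA m n n' hm z z' w w') {h h' : ℕ} (h2' : h' ≤ m - 2) :
    nuH m n' h hm z z' w' ≠ nuH m n' h' hm z' z w' := by
  intro heq
  have := congrFun heq (z' ⟨0, by omega⟩)
  rw [(H.nuH_eq h).2.1, (H.symm.nuH_eq h').1] at this
  omega

/-- The function `ν_h` lies below `ν` as soon as `ν` decreases enough along the two short
covering relations. -/
theorem nuH_le (H : IsTypeA m n n' hm z z' w w') {h : ℕ} (h1 : 1 ≤ h) (h2 : h ≤ m - 1)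
    {ν : Q → ℕ} (hν : IsTPAt (w' (Fin.last n')) ν)
    (hA : ν (z' ⟨0, by omega⟩) = ν (z ⟨m - 1, by omega⟩) + h ∨
      h = m - 1 ∧ ν (z ⟨m - 1, by omega⟩) + (m - 1) ≤ ν (z' ⟨0, by omega⟩) ∧
        ν (z' ⟨m - 1, by omega⟩) + (m - 1) ≤ ν (z ⟨0, by omega⟩)) :
    LeTP (nuH m n' h hm z z' w') ν := by
  obtain ⟨hz, hz', hw, hw'⟩ := H.nuH_eq h
  refine LeTP.of_covBy H.top (by simp [hw']) hν.1 (H.forall_covBy_iff.2 ?_)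
  have hle : (⟨0, by omega⟩ : Fin m) ≤ ⟨m - 1, by omega⟩ := Nat.zero_le _
  have dz := Fin.add_sub_le_of_strictAnti (hν.2.comp_strictMono H.strictMono_z) hle
  have dz' := Fin.add_sub_le_of_strictAnti (hν.2.comp_strictMono H.symm.strictMono_z) hle
  obtain ⟨c1, c2, c3, c4, c5, c6, c7, c8, c9, c10⟩ :=
    H.forall_covBy_iff (p := fun a b => ν b < ν a) |>.1 fun _ _ h => hν.2 h.lt
  simp only [Function.comp_apply] at dz dz'
  simp only [hz, hz', hw, hw', Fin.val_castSucc, Fin.val_succ, Fin.val_last, Fin.val_zero]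
  refine ⟨fun i => ?_, fun i => ?_, ?_, ?_, fun i hi => ?_, fun i hi => ?_, ?_, ?_, ?_, ?_⟩
  · have := c1 i; omega
  · have := c2 i; omega
  · omega
  · omega
  · have := c5 i hi; omega
  · have := c6 i hi; omega
  all_goals omega

theorem exists_nuH_le (H : IsTypeA m n n' hm z z' w w') {ν : Q → ℕ}
    (hν : IsTPAt (w' (Fin.last n')) ν) :
    (∃ h : ℕ, 1 ≤ h ∧ h ≤ m - 1 ∧ LeTP (nuH m n' h hm z z' w') ν) ∨
      (∃ h : ℕ, 1 ≤ h ∧ h ≤ m - 2 ∧ LeTP (nuH m n' h hm z' z w') ν) := by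
  obtain ⟨-, -, -, -, -, -, -, -, c9, c10⟩ :=
    H.forall_covBy_iff (p := fun a b => ν b < ν a) |>.1 fun _ _ h => hν.2 h.lt
  by_cases hA : ν (z' ⟨0, by omega⟩) ≤ ν (z ⟨m - 1, by omega⟩) + (m - 1)
  · refine .inl ⟨ν (z' ⟨0, by omega⟩) - ν (z ⟨m - 1, by omega⟩), by omega, by omega,
      H.nuH_le (by omega) (by omega) hν (.inl (by omega))⟩
  · by_cases hB : ν (z ⟨0, by omega⟩) ≤ ν (z' ⟨m - 1, by omega⟩) + (m - 2)
    · exact .inr ⟨ν (z ⟨0, by omega⟩) - ν (z' ⟨m - 1, by omega⟩), by omega, by omega,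
        H.symm.nuH_le (by omega) (by omega) hν (.inl (by omega))⟩
    · exact .inl ⟨m - 1, by omega, le_rfl,
        H.nuH_le (by omega) le_rfl hν (.inr ⟨rfl, by omega, by omega⟩)⟩

end Nu

end IsTypeA

/-- for a poset of type (a), the minimal elements of `(T(P), ≤)` are
exactly the pairwise distinct functions `ν₁, …, ν_{m−1}, ν'₁, …, ν'_{m−2}`; in
particular there are exactly `2m − 3` of them. -/
theorem typeA_minimal_elements
    {Q : Type*} [Fintype Q] [PartialOrder Q] [DecidableEq Q]
    [DecidableRel ((· ≤ ·) : Q → Q → Prop)]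
    (m n n' : ℕ) (hm : 3 ≤ m)
    (z z' : Fin m → Q) (w : Fin (n + 1) → Q) (w' : Fin (n' + 1) → Q)
    (hbij : Function.Bijective
      (Sum.elim (Sum.elim z z') (Sum.elim w w') :
        (Fin m ⊕ Fin m) ⊕ (Fin (n + 1) ⊕ Fin (n' + 1)) → Q))
    (hcov : ∀ a b : Q, a ⋖ b ↔ TypeACovers m n n' hm z z' w w' a b)
    (hbot : ∀ q : Q, w 0 ≤ q)
    (htop : ∀ q : Q, q ≤ w' (Fin.last n')) :
    (∀ h : ℕ, 1 ≤ h → h ≤ m - 1 →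
      IsMinTPAt (w' (Fin.last n')) (nuH m n' h hm z z' w')) ∧
    (∀ h : ℕ, 1 ≤ h → h ≤ m - 2 →
      IsMinTPAt (w' (Fin.last n')) (nuH m n' h hm z' z w')) ∧
    (∀ h h' : ℕ, 1 ≤ h → h ≤ m - 1 → 1 ≤ h' → h' ≤ m - 1 →
      nuH m n' h hm z z' w' = nuH m n' h' hm z z' w' → h = h') ∧
    (∀ h h' : ℕ, 1 ≤ h → h ≤ m - 2 → 1 ≤ h' → h' ≤ m - 2 →
      nuH m n' h hm z' z w' = nuH m n' h' hm z' z w' → h = h') ∧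
    (∀ h h' : ℕ, 1 ≤ h → h ≤ m - 1 → 1 ≤ h' → h' ≤ m - 2 →
      nuH m n' h hm z z' w' ≠ nuH m n' h' hm z' z w') ∧
    (∀ ν : Q → ℕ, IsMinTPAt (w' (Fin.last n')) ν →
      (∃ h : ℕ, 1 ≤ h ∧ h ≤ m - 1 ∧ ν = nuH m n' h hm z z' w') ∨
      (∃ h : ℕ, 1 ≤ h ∧ h ≤ m - 2 ∧ ν = nuH m n' h hm z' z w')) ∧
    {ν : Q → ℕ | IsMinTPAt (w' (Fin.last n')) ν}.ncard = 2 * m - 3 := by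
  have H : IsTypeA m n n' hm z z' w w' := ⟨hbij, hcov, htop⟩
  have hmin : ∀ ν : Q → ℕ, IsMinTPAt (w' (Fin.last n')) ν →
      (∃ h : ℕ, 1 ≤ h ∧ h ≤ m - 1 ∧ ν = nuH m n' h hm z z' w') ∨
      (∃ h : ℕ, 1 ≤ h ∧ h ≤ m - 2 ∧ ν = nuH m n' h hm z' z w') := by
    rintro ν ⟨hν, hν'⟩
    rcases H.exists_nuH_le hν with ⟨h, h1, h2, hle⟩ | ⟨h, h1, h2, hle⟩
    · exact .inl ⟨h, h1, h2, (hν' _ (H.isTPAt_nuH h1) hle).symm⟩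
    · exact .inr ⟨h, h1, h2, (hν' _ (H.symm.isTPAt_nuH h1) hle).symm⟩
  refine ⟨fun h h1 _ => H.isMinTPAt_nuH h1, fun h h1 _ => H.symm.isMinTPAt_nuH h1,
    fun h h' _ h2 _ h2' => H.eq_of_nuH_eq h2 h2',
    fun h h' _ h2 _ h2' => H.symm.eq_of_nuH_eq (by omega) (by omega),
    fun h h' _ _ _ h2' => H.nuH_ne_nuH_swap h2', hmin, ?_⟩
  have hset : {ν : Q → ℕ | IsMinTPAt (w' (Fin.last n')) ν} =
      (fun h => nuH m n' h hm z z' w') '' Set.Icc 1 (m - 1) ∪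
        (fun h => nuH m n' h hm z' z w') '' Set.Icc 1 (m - 2) := by
    ext ν
    constructor
    · intro hν
      rcases hmin ν hν with ⟨h, h1, h2, rfl⟩ | ⟨h, h1, h2, rfl⟩
      · exact .inl ⟨h, ⟨h1, h2⟩, rfl⟩
      · exact .inr ⟨h, ⟨h1, h2⟩, rfl⟩
    · rintro (⟨h, ⟨h1, -⟩, rfl⟩ | ⟨h, ⟨h1, -⟩, rfl⟩)
      · exact H.isMinTPAt_nuH h1
      · exact H.symm.isMinTPAt_nuH h1
  have hdisj : Disjoint ((fun h => nuH m n' h hm z z' w') '' Set.Icc 1 (m - 1))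
      ((fun h => nuH m n' h hm z' z w') '' Set.Icc 1 (m - 2)) := by
    rw [Set.disjoint_left]
    rintro _ ⟨h, -, rfl⟩ ⟨h', ⟨-, h2'⟩, heq⟩
    exact H.nuH_ne_nuH_swap h2' heq.symm
  rw [hset, Set.ncard_union_eq hdisj ((Set.finite_Icc _ _).image _)
    ((Set.finite_Icc _ _).image _), Set.InjOn.ncard_image, Set.InjOn.ncard_image]
  · simp only [← Finset.coe_Icc, Set.ncard_coe_finset, Nat.card_Icc]
    omega
  · rintro h ⟨-, h2⟩ h' ⟨-, h2'⟩ heq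
    exact H.symm.eq_of_nuH_eq (by omega) (by omega) heq
  · rintro h ⟨-, h2⟩ h' ⟨-, h2'⟩ heq
    exact H.eq_of_nuH_eq h2 h2' heq
end
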